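/- arXiv:2303.10665 — 2 statements merged into one kernel-verified Lean document; each statement's English description precedes it below -/
import Mathlib

section
/- (Propagation of chaos for deterministic MFC.) Let 𝒳, 𝒰 be compact metric spaces, p(·|x,u,μ) a continuous transition kernel, and Π an equi-Lipschitz class of policies: there is L_Π > 0 such that π_t(·|x,μ) ∈ 𝒫(𝒰) is L_Π-Lipschitz in (x,μ) for all t and π ∈ Π. Consider the N-agent system with i.i.d. initial states x_0^{i,N} ∼ μ_0, actions u_t^{i,N} ∼ π_t(·|x_t^{i,N}, μ_t^N), transitions x_{t+1}^{i,N} ∼ p(·|x_t^{i,N}, u_t^{i,N}, μ_t^N), where μ_t^N := (1/N) Σ_i δ_{x_t^{i,N}}; and the deterministic limit MF μ_{t+1} = ∬ p(·|x,u,μ_t) π_t(du|x,μ_t) μ_t(dx) with μ_0 given. Then for any family ℱ ⊆ ℝ^{𝒫(𝒳)} of equicontinuous functions, at every time t ∈ ℕ: sup_{π ∈ Π} sup_{f ∈ ℱ} | E[f(μ_t^N)] − f(μ_t) | → 0 as N → ∞. -/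
open MeasureTheory

/-- `W₁` distance on probability measures, via Kantorovich duality. -/
noncomputable def W1 {X : Type*} [MeasurableSpace X] [PseudoMetricSpace X]
    (μ ν : ProbabilityMeasure X) : ℝ :=
  ⨆ f : {f : X → ℝ // LipschitzWith 1 f},
    |∫ x, (f : X → ℝ) x ∂(μ : Measure X) - ∫ x, (f : X → ℝ) x ∂(ν : Measure X)|

/-- Empirical measure of `N` points (an arbitrary probability measure if `N = 0`). -/
noncomputable def emp {X : Type*} [MeasurableSpace X] [Nonempty X] (N : ℕ) (x : Fin N → X) :
    ProbabilityMeasure X := by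
  classical
  exact if hN : N = 0 then ⟨Measure.dirac (Classical.arbitrary X), inferInstance⟩
  else ⟨(N : ENNReal)⁻¹ • ∑ i : Fin N, Measure.dirac (x i), by
    constructor
    simp only [Measure.smul_apply, Measure.coe_finset_sum, Finset.sum_apply,
      Measure.dirac_apply' _ MeasurableSet.univ, smul_eq_mul]
    simp only [Set.indicator_univ, Pi.one_apply, Finset.sum_const, Finset.card_univ,
      Fintype.card_fin, nsmul_eq_mul, mul_one]
    exact ENNReal.inv_mul_cancel (by exact_mod_cast hN) (by simp)⟩

/-- Law of the `N`-agent deterministic-MFC system at each time: agents start i.i.d. `μ0`,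
sample actions from the shared policy `π` given own state and the empirical mean field, and
transition through the kernel `p`. -/
noncomputable def mfcLawN {X U : Type*} [MeasurableSpace X] [Nonempty X] [MeasurableSpace U]
    (p : X → U → ProbabilityMeasure X → ProbabilityMeasure X)
    (π : ℕ → X → ProbabilityMeasure X → ProbabilityMeasure U)
    (μ0 : ProbabilityMeasure X) (N : ℕ) : ℕ → Measure (Fin N → X)
  | 0 => Measure.pi fun _ => (μ0 : Measure X)
  | t + 1 => (mfcLawN p π μ0 N t).bind fun x =>
      Measure.pi fun i => ((π t (x i) (emp N x) : Measure U)).bind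
        fun u => (p (x i) u (emp N x) : Measure X)

open Filter Topology

set_option linter.unusedSectionVars false

namespace MFC

section basic
variable {X : Type*} [MetricSpace X] [CompactSpace X] [MeasurableSpace X] [BorelSpace X]

lemma integ {Y : Type*} [TopologicalSpace Y] [CompactSpace Y] [MeasurableSpace Y]
    [OpensMeasurableSpace Y] (m : Measure Y) [IsFiniteMeasure m] {g : Y → ℝ}
    (hg : Continuous g) : Integrable g m := by
  exact hg.integrable_of_hasCompactSupport (HasCompactSupport.of_compactSpace g)

lemma abs_int_le {Y : Type*} [MeasurableSpace Y] (m : Measure Y) [IsProbabilityMeasure m]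
    {g : Y → ℝ} {c : ℝ} (h : ∀ y, |g y| ≤ c) : |∫ y, g y ∂m| ≤ c := by
  have := norm_integral_le_of_norm_le_const (μ := m) (f := g) (C := c) (ae_of_all _ h)
  simpa using this

lemma abs_int_sub_le {Y : Type*} [MeasurableSpace Y] (m : Measure Y) [IsProbabilityMeasure m]
    {g h : Y → ℝ} {c : ℝ} (ig : Integrable g m) (ih : Integrable h m)
    (H : ∀ y, |g y - h y| ≤ c) : |∫ y, g y ∂m - ∫ y, h y ∂m| ≤ c := by
  rw [← integral_sub ig ih]
  exact abs_int_le m H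

lemma lip_diff {f : X → ℝ} (hf : LipschitzWith 1 f) (μ ν : ProbabilityMeasure X) :
    |∫ x, f x ∂(μ : Measure X) - ∫ x, f x ∂(ν : Measure X)| ≤
      2 * Metric.diam (Set.univ : Set X) := by
  obtain ⟨x0⟩ := μ.nonempty
  have key : ∀ m : ProbabilityMeasure X, |∫ x, f x ∂(m : Measure X) - f x0| ≤
      Metric.diam (Set.univ : Set X) := by
    intro m
    have h0 : ∫ x, f x0 ∂(m : Measure X) = f x0 := by simp
    rw [← h0]
    refine abs_int_sub_le _ (integ _ hf.continuous) (integrable_const _) fun y => ?_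
    have h1 := hf.dist_le_mul y x0
    rw [Real.dist_eq] at h1
    have h2 := Metric.dist_le_diam_of_mem (isCompact_univ (X := X)).isBounded
      (Set.mem_univ y) (Set.mem_univ x0)
    simp at h1
    linarith
  have a := abs_le.1 (key μ)
  have b := abs_le.1 (key ν)
  rw [abs_le]; constructor <;> linarith

lemma W1_bdd (μ ν : ProbabilityMeasure X) : BddAbove (Set.range
    fun f : {f : X → ℝ // LipschitzWith 1 f} =>
    |∫ x, (f : X → ℝ) x ∂(μ : Measure X) - ∫ x, (f : X → ℝ) x ∂(ν : Measure X)|) := by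
  refine ⟨2 * Metric.diam (Set.univ : Set X), ?_⟩
  rintro _ ⟨f, rfl⟩
  exact lip_diff f.2 μ ν

lemma le_W1 {f : X → ℝ} (hf : LipschitzWith 1 f) (μ ν : ProbabilityMeasure X) :
    |∫ x, f x ∂(μ : Measure X) - ∫ x, f x ∂(ν : Measure X)| ≤ W1 μ ν :=
  le_ciSup (W1_bdd μ ν) ⟨f, hf⟩

instance : Nonempty {f : X → ℝ // LipschitzWith 1 f} :=
  ⟨⟨fun _ => 0, LipschitzWith.const' 0⟩⟩

lemma W1_le {μ ν : ProbabilityMeasure X} {c : ℝ} (h : ∀ f : X → ℝ, LipschitzWith 1 f →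
    |∫ x, f x ∂(μ : Measure X) - ∫ x, f x ∂(ν : Measure X)| ≤ c) : W1 μ ν ≤ c :=
  ciSup_le fun f => h f.1 f.2

lemma W1_nonneg (μ ν : ProbabilityMeasure X) : 0 ≤ W1 μ ν :=
  le_trans (abs_nonneg _) (le_W1 (f := fun _ => 0) (LipschitzWith.const' 0) μ ν)

lemma W1_self (μ : ProbabilityMeasure X) : W1 μ μ = 0 :=
  le_antisymm (W1_le fun f _ => by simp) (W1_nonneg _ _)

lemma W1_comm (μ ν : ProbabilityMeasure X) : W1 μ ν = W1 ν μ := by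
  simp only [W1, abs_sub_comm]

lemma W1_triangle (μ ν ξ : ProbabilityMeasure X) : W1 μ ξ ≤ W1 μ ν + W1 ν ξ := by
  refine W1_le fun f hf => ?_
  have a := le_W1 hf μ ν
  have b := le_W1 hf ν ξ
  exact (abs_sub_le _ _ _).trans (add_le_add a b)

lemma W1_bound (μ ν : ProbabilityMeasure X) : W1 μ ν ≤ 2 * Metric.diam (Set.univ : Set X) :=
  W1_le fun _ hf => lip_diff hf μ ν

/-- finite net of test functions -/
lemma net {ε : ℝ} (hε : 0 < ε) : ∃ s : Finset C(X, ℝ), ∀ μ ν : ProbabilityMeasure X,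
    W1 μ ν ≤ ε + ∑ g ∈ s, |∫ x, g x ∂(μ : Measure X) - ∫ x, g x ∂(ν : Measure X)| := by
  classical
  rcases isEmpty_or_nonempty X with hX | ⟨⟨x0⟩⟩
  · exact ⟨∅, fun μ => (hX.false μ.nonempty.some).elim⟩
  let D := Metric.diam (Set.univ : Set X)
  let A : Set (BoundedContinuousFunction X ℝ) := {f | LipschitzWith 1 f ∧ f x0 = 0}
  have hA : IsCompact (closure A) := by
    refine BoundedContinuousFunction.arzela_ascoli (Set.Icc (-D) D) isCompact_Icc A ?_ ?_
    · rintro f x ⟨hf, h0⟩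
      have h1 := hf.dist_le_mul x x0
      have h2 := Metric.dist_le_diam_of_mem (isCompact_univ (X := X)).isBounded
        (Set.mem_univ x) (Set.mem_univ x0)
      rw [Real.dist_eq, h0] at h1
      simp at h1
      exact abs_le.1 (h1.trans h2)
    · intro x
      rw [Metric.equicontinuousAt_iff]
      intro e he
      refine ⟨e, he, fun y hy f => ?_⟩
      have := f.2.1.dist_le_mul x y
      simp only [NNReal.coe_one, one_mul] at this
      refine lt_of_le_of_lt this ?_
      rwa [dist_comm]
  obtain ⟨t, -, htf, ht⟩ := Metric.totallyBounded_iff.1 hA.totallyBounded (ε/2) (by positivity) |>.imp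
    fun t h => (⟨trivial, h⟩ : True ∧ _)
  refine ⟨htf.toFinset.image BoundedContinuousFunction.toContinuousMap, fun μ ν => W1_le fun f hf => ?_⟩
  let f' : BoundedContinuousFunction X ℝ :=
    BoundedContinuousFunction.mkOfCompact ⟨fun x => f x - f x0, by
      exact hf.continuous.sub continuous_const⟩
  have hf' : f' ∈ A := by
    refine ⟨?_, by simp [f']⟩
    refine LipschitzWith.of_dist_le_mul fun x y => ?_
    have := hf.dist_le_mul x y
    simpa [f'] using this
  obtain ⟨g, hg, hfg⟩ : ∃ g ∈ t, f' ∈ Metric.ball g (ε/2) := by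
    simpa using ht (subset_closure hf')
  have key : ∀ m : ProbabilityMeasure X,
      |(∫ x, f x ∂(m : Measure X) - f x0) - ∫ x, g x ∂(m : Measure X)| ≤ ε/2 := by
    intro m
    have h0 : ∫ x, f x ∂(m : Measure X) - f x0 = ∫ x, f' x ∂(m : Measure X) := by
      have : ∫ x, f' x ∂(m : Measure X) = ∫ x, (f x - f x0) ∂(m : Measure X) := rfl
      rw [this, integral_sub (integ _ hf.continuous) (integrable_const _)]
      simp
    rw [h0]
    refine abs_int_sub_le _ (integ _ f'.continuous) (integ _ g.continuous) fun y => ?_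
    have := (BoundedContinuousFunction.dist_coe_le_dist (f := f') (g := g) y)
    rw [Real.dist_eq] at this
    exact this.trans (Metric.mem_ball.1 hfg).le
  have h3 : |∫ x, g x ∂(μ : Measure X) - ∫ x, g x ∂(ν : Measure X)| ≤
      ∑ g ∈ htf.toFinset.image BoundedContinuousFunction.toContinuousMap,
        |∫ x, g x ∂(μ : Measure X) - ∫ x, g x ∂(ν : Measure X)| := by
    refine Finset.single_le_sum (f := fun g : C(X, ℝ) =>
      |∫ x, g x ∂(μ : Measure X) - ∫ x, g x ∂(ν : Measure X)|) (fun _ _ => abs_nonneg _)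
      (a := g.toContinuousMap) ?_
    exact Finset.mem_image_of_mem _ (by simpa using hg)
  have a := abs_le.1 (key μ)
  have b := abs_le.1 (key ν)
  have c := abs_le.1 (le_refl |∫ x, g x ∂(μ : Measure X) - ∫ x, g x ∂(ν : Measure X)|)
  refine le_trans ?_ (add_le_add le_rfl h3)
  rw [abs_le]; constructor <;> linarith

/-- real continuity from moduli -/
lemma cont_integral {Y : Type*} [TopologicalSpace Y] {κ : Y → ProbabilityMeasure X}
    (hκ : Continuous κ) {g : X → ℝ} (hg : Continuous g) :
    Continuous fun y => ∫ x, g x ∂(κ y : Measure X) :=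
  (ProbabilityMeasure.continuous_integral_continuousMap (⟨g, hg⟩ : C(X, ℝ))).comp hκ

lemma W1_tendsto (μ : ProbabilityMeasure X) : Tendsto (fun ν => W1 μ ν) (𝓝 μ) (𝓝 0) := by
  rw [Metric.tendsto_nhds]
  intro e he
  obtain ⟨s, hs⟩ := net (X := X) (half_pos he)
  have hc : Continuous fun ν : ProbabilityMeasure X =>
      ∑ g ∈ s, |∫ x, g x ∂(μ : Measure X) - ∫ x, g x ∂(ν : Measure X)| :=
    continuous_finsetSum _ fun g _ =>
      (continuous_const.sub (cont_integral continuous_id g.continuous)).abs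
  have := hc.tendsto μ
  simp only [sub_self, abs_zero, Finset.sum_const_zero] at this
  filter_upwards [this.eventually (gt_mem_nhds (half_pos he))] with ν hν
  rw [Real.dist_eq, sub_zero, abs_of_nonneg (W1_nonneg _ _)]
  linarith [hs μ ν]

lemma W1_continuous : Continuous fun z : ProbabilityMeasure X × ProbabilityMeasure X =>
    W1 z.1 z.2 := by
  rw [continuous_iff_continuousAt]
  rintro ⟨μ, ν⟩
  have h1 : Tendsto (fun z : ProbabilityMeasure X × ProbabilityMeasure X =>
      W1 μ z.1 + W1 ν z.2) (𝓝 (μ, ν)) (𝓝 (0 + 0)) :=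
    ((W1_tendsto μ).comp (continuous_fst.tendsto (μ, ν))).add
      ((W1_tendsto ν).comp (continuous_snd.tendsto (μ, ν)))
  rw [add_zero] at h1
  unfold ContinuousAt
  rw [tendsto_iff_dist_tendsto_zero]
  refine squeeze_zero (fun _ => dist_nonneg) (fun z => ?_) h1
  have a := W1_triangle μ z.1 ν
  have b := W1_triangle z.1 z.2 ν
  have c := W1_triangle z.1 μ z.2
  have d := W1_triangle μ ν z.2
  rw [W1_comm z.1 μ] at c
  rw [W1_comm z.2 ν] at b
  simp only [Real.dist_eq, abs_le]
  constructor <;> linarith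

/-- compactness modulus lemma -/
lemma modulus {K : Type*} [TopologicalSpace K] [CompactSpace K] {h : K → ℝ} (hh : Continuous h)
    {ρ : K → K → ℝ} (hρ : Continuous fun z : K × K => ρ z.1 z.2) (h0 : ∀ a b, 0 ≤ ρ a b)
    (h1 : ∀ a b, ρ a b = 0 → h a = h b) {ε : ℝ} (hε : 0 < ε) :
    ∃ C > 0, ∀ a b, |h a - h b| ≤ ε + C * ρ a b := by
  have hc : Continuous fun z : K × K => |h z.1 - h z.2| := by fun_prop
  let S : Set (K × K) := {z | ε ≤ |h z.1 - h z.2|}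
  have hS : IsCompact S := (isClosed_le continuous_const hc).isCompact
  obtain ⟨M, hM⟩ := (isCompact_univ (X := K × K)).exists_bound_of_continuousOn hc.continuousOn
  rcases S.eq_empty_or_nonempty with hE | hne
  · refine ⟨1, one_pos, fun a b => ?_⟩
    have : (a, b) ∉ S := by simp [hE]
    simp only [S, Set.mem_ofPred_eq, not_le] at this
    linarith [h0 a b]
  · obtain ⟨z, hz, hmin⟩ := hS.exists_isMinOn hne hρ.continuousOn
    have hpos : 0 < ρ z.1 z.2 := by
      refine lt_of_le_of_ne (h0 _ _) fun h => ?_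
      have := h1 _ _ h.symm
      simp only [S, Set.mem_ofPred_eq, this, sub_self, abs_zero] at hz
      linarith
    refine ⟨(|M| + 1) / ρ z.1 z.2, by positivity, fun a b => ?_⟩
    by_cases hab : (a, b) ∈ S
    · have h2 : ρ z.1 z.2 ≤ ρ a b := hmin hab
      have h3 := hM (a, b) trivial
      simp only [Real.norm_eq_abs, abs_abs] at h3
      have h4 : |M| + 1 ≤ (|M| + 1) / ρ z.1 z.2 * ρ a b := by
        rw [div_mul_eq_mul_div, le_div_iff₀ hpos]
        gcongr
      linarith [le_abs_self M]
    · simp only [S, Set.mem_ofPred_eq, not_le] at hab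
      have : 0 ≤ (|M| + 1) / ρ z.1 z.2 * ρ a b := by have := h0 a b; positivity
      linarith

/-- approximate Lipschitz functions -/
lemma approx_lip {g : X → ℝ} (hg : Continuous g) {ε C : ℝ} (hC : 0 < C)
    (h : ∀ x y, |g x - g y| ≤ ε + C * dist x y) {M : ℝ} (α β : ProbabilityMeasure X)
    (hM : ∀ f : X → ℝ, LipschitzWith 1 f →
      |∫ x, f x ∂(α : Measure X) - ∫ x, f x ∂(β : Measure X)| ≤ M) :
    |∫ x, g x ∂(α : Measure X) - ∫ x, g x ∂(β : Measure X)| ≤ 2 * ε + C * M := by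
  have : Nonempty X := α.nonempty
  let k : X → ℝ := fun x => ⨅ y, (g y + C * dist x y)
  have hbd : ∀ x, BddBelow (Set.range fun y => g y + C * dist x y) := fun x => by
    refine ⟨g x - ε, ?_⟩
    rintro _ ⟨y, rfl⟩
    have := (abs_le.1 (h x y)).2
    simp only; linarith
  have k1 : ∀ x, k x ≤ g x := fun x => by
    have := ciInf_le (hbd x) x
    simpa using this
  have k2 : ∀ x, g x - ε ≤ k x := fun x => by
    refine le_ciInf fun y => ?_
    have := (abs_le.1 (h x y)).2
    linarith
  have k3 : ∀ x y, k x ≤ k y + C * dist x y := fun x y => by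
    rw [← sub_le_iff_le_add]
    refine le_ciInf fun z => ?_
    have h1 := ciInf_le (hbd x) z
    have h2 := dist_triangle x y z
    have h3 := mul_le_mul_of_nonneg_left h2 hC.le
    change k x ≤ _ at h1
    linarith
  have hlip : LipschitzWith 1 fun x => C⁻¹ * k x := by
    refine LipschitzWith.of_le_add fun x y => ?_
    have := k3 x y
    have h4 : C⁻¹ * k x ≤ C⁻¹ * (k y + C * dist x y) := by gcongr
    rw [mul_add, inv_mul_cancel_left₀ hC.ne'] at h4
    exact h4
  have kc : Continuous k := by
    have h6 : k = fun x => C * (C⁻¹ * k x) := by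
      funext x
      rw [mul_inv_cancel_left₀ hC.ne']
    rw [h6]
    exact continuous_const.mul hlip.continuous
  have h5 := hM _ hlip
  rw [integral_const_mul, integral_const_mul, ← mul_sub, abs_mul, abs_of_pos (inv_pos.2 hC),
    inv_mul_le_iff₀ hC] at h5
  have key : ∀ m : ProbabilityMeasure X,
      |∫ x, g x ∂(m : Measure X) - ∫ x, k x ∂(m : Measure X)| ≤ ε := fun m => by
    refine abs_int_sub_le _ (integ _ hg) (integ _ kc) fun y => ?_
    rw [abs_le]
    have := k1 y
    have := k2 y
    have := (abs_nonneg _).trans (h y y)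
    simp only [dist_self, mul_zero, add_zero] at this
    constructor <;> linarith
  have a := abs_le.1 (key α)
  have b := abs_le.1 (key β)
  have c := abs_le.1 h5
  rw [abs_le]; constructor <;> linarith

lemma eq_of_W1 {μ ν : ProbabilityMeasure X} (h : W1 μ ν = 0) : μ = ν := by
  have key : ∀ g : X → ℝ, Continuous g →
      ∫ x, g x ∂(μ : Measure X) = ∫ x, g x ∂(ν : Measure X) := fun g hg => by
    rw [← sub_eq_zero, ← abs_eq_zero]
    refine le_antisymm (le_of_forall_pos_le_add fun e he => ?_) (abs_nonneg _)
    obtain ⟨C, hC, hC'⟩ := modulus hg (ρ := dist) continuous_dist (fun _ _ => dist_nonneg)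
      (fun a b hab => by rw [dist_eq_zero.1 hab]) (half_pos he)
    have := approx_lip hg hC hC' μ ν fun f hf => le_W1 hf μ ν
    rw [h] at this
    linarith
  apply ProbabilityMeasure.toMeasure_injective
  exact ext_of_forall_integral_eq_of_IsFiniteMeasure fun g => key g g.continuous

end basic

end MFC

namespace MFC

section emp
variable {X : Type*} [MetricSpace X] [CompactSpace X] [MeasurableSpace X] [BorelSpace X] [Nonempty X]

lemma emp_coe {N : ℕ} (hN : N ≠ 0) (x : Fin N → X) :
    (emp N x : Measure X) = (N : ENNReal)⁻¹ • ∑ i : Fin N, Measure.dirac (x i) := by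
  have h : emp N x = _ := dif_neg hN
  exact congrArg (fun m : ProbabilityMeasure X => (m : Measure X)) h

lemma emp_int {N : ℕ} (hN : N ≠ 0) (x : Fin N → X) {g : X → ℝ} (hg : Continuous g) :
    ∫ y, g y ∂(emp N x : Measure X) = (N : ℝ)⁻¹ * ∑ i, g (x i) := by
  rw [emp_coe hN, integral_smul_measure, integral_finsetSum_measure]
  · simp
  · intro i _
    exact integ _ hg

lemma emp_continuous {N : ℕ} (hN : N ≠ 0) : Continuous (emp (X := X) N) := by
  rw [ProbabilityMeasure.continuous_iff_forall_continuousMap_continuous_integral]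
  intro g
  simp only [emp_int hN _ g.continuous]
  fun_prop

lemma meas_of_cont {Y : Type*} [TopologicalSpace Y] [MeasurableSpace Y] [OpensMeasurableSpace Y]
    {κ : Y → ProbabilityMeasure X} (hκ : Continuous κ) :
    Measurable fun y => (κ y : Measure X) := by
  refine Measurable.measure_of_isPiSystem_of_isProbabilityMeasure
    (S := {s | IsClosed s}) ?_ ?_ ?_
  · rw [BorelSpace.measurable_eq (α := X), borel_eq_generateFrom_isClosed]
  · intro s hs t ht _
    exact IsClosed.inter hs ht
  · intro s hs
    have hp : ∀ n : ℕ, (0 : ℝ) < 1 / ((n : ℝ) + 1) := fun n => by positivity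
    refine measurable_of_tendsto_metrizable (f := fun (n : ℕ) y =>
      ∫⁻ ω, (thickenedIndicator (hp n) s ω : ENNReal) ∂(κ y : Measure X)) ?_ ?_
    · intro n
      exact ((ProbabilityMeasure.continuous_lintegral_continuousMap
        (thickenedIndicator (hp n) s)).comp hκ).measurable
    · rw [tendsto_pi_nhds]
      intro y
      exact tendsto_lintegral_thickenedIndicator_of_isClosed _ hs hp
        tendsto_one_div_add_atTop_nhds_zero_nat

lemma pi_meas {Y : Type*} [MeasurableSpace Y] {N : ℕ} {κ : Y → Fin N → Measure X}
    [∀ y i, IsProbabilityMeasure (κ y i)]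
    (hκ : ∀ i, Measurable fun y => κ y i) : Measurable fun y => Measure.pi (κ y) := by
  refine Measurable.measure_of_isPiSystem_of_isProbabilityMeasure
    generateFrom_pi.symm isPiSystem_pi ?_
  rintro _ ⟨s, hs, rfl⟩
  simp only [Measure.pi_pi]
  refine Finset.measurable_prod _ fun i _ => ?_
  exact (Measure.measurable_coe (hs i (Set.mem_univ i))).comp (hκ i)

end emp

lemma bind_prob {α β : Type*} [MeasurableSpace α] [MeasurableSpace β] (m : Measure α)
    [IsProbabilityMeasure m] {κ : α → Measure β} (hκ : Measurable κ)
    [∀ a, IsProbabilityMeasure (κ a)] : IsProbabilityMeasure (m.bind κ) := by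
  constructor
  rw [Measure.bind_apply MeasurableSet.univ hκ.aemeasurable]
  simp

lemma ibind {α β : Type*} [MeasurableSpace α] [MeasurableSpace β] (m : Measure α)
    [IsProbabilityMeasure m] {κ : α → Measure β} (hκ : Measurable κ)
    [∀ a, IsProbabilityMeasure (κ a)] {g : β → ℝ} (hg : Integrable g (m.bind κ)) :
    ∫ y, g y ∂(m.bind κ) = ∫ x, ∫ y, g y ∂(κ x) ∂m := by
  let K : ProbabilityTheory.Kernel α β := ⟨κ, hκ⟩
  have : ProbabilityTheory.IsMarkovKernel K := ⟨fun a => by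
    change IsProbabilityMeasure (κ a); infer_instance⟩
  have h := ProbabilityTheory.Kernel.integral_comp (η := K)
    (κ := ProbabilityTheory.Kernel.const Unit m) (a := ()) (f := g)
  rw [ProbabilityTheory.Kernel.comp_apply] at h
  exact h hg

section lln
variable {X : Type*} [MetricSpace X] [CompactSpace X] [MeasurableSpace X] [BorelSpace X] [Nonempty X]


lemma lln1 (g : C(X, ℝ)) {ε : ℝ} (hε : 0 < ε) : ∃ N0 : ℕ, 0 < N0 ∧ ∀ N ≥ N0,
    ∀ ν : Fin N → Measure X, (∀ i, IsProbabilityMeasure (ν i)) →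
    ∫ y, |(N : ℝ)⁻¹ * ∑ i, g (y i) - (N : ℝ)⁻¹ * ∑ i, ∫ x, g x ∂(ν i)| ∂(Measure.pi ν) ≤ ε := by
  let M := ‖g‖
  obtain ⟨N0, hN0⟩ := exists_nat_gt (M ^ 2 / ε ^ 2)
  have hN0' : 0 < N0 := by
    have : (0 : ℝ) < N0 := lt_of_le_of_lt (by positivity) hN0
    exact_mod_cast this
  refine ⟨N0, hN0', fun N hN ν hν => ?_⟩
  have hNpos : (0 : ℝ) < N := by exact_mod_cast lt_of_lt_of_le hN0' hN
  have hle : M ^ 2 ≤ N * ε ^ 2 := by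
    have : (N0 : ℝ) ≤ N := by exact_mod_cast hN
    rw [div_lt_iff₀ (by positivity)] at hN0
    nlinarith [sq_nonneg ε]
  let P := Measure.pi ν
  let S : (Fin N → X) → ℝ := ∑ i, fun y => g (y i)
  have hSc : Continuous S := by
    have : S = fun y => ∑ i, g (y i) := by funext y; simp [S]
    rw [this]; fun_prop
  have hmean : ∫ y, S y ∂P = ∑ i, ∫ x, g x ∂(ν i) := by
    have : ∀ y, S y = ∑ i, g (y i) := by intro y; simp [S]
    simp only [this]
    rw [integral_finsetSum _ fun i _ => integ _ (by fun_prop)]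
    refine Finset.sum_congr rfl fun i _ => ?_
    rw [← (measurePreserving_eval ν i).map_eq]
    rw [integral_map (measurable_pi_apply i).aemeasurable
      g.continuous.aestronglyMeasurable]
  have hvar : ProbabilityTheory.variance S P ≤ N * M ^ 2 := by
    rw [ProbabilityTheory.variance_sum_pi (X := fun _ => g)]
    · refine (Finset.sum_le_card_nsmul _ _ (M ^ 2) fun i _ => ?_).trans (by simp)
      refine (ProbabilityTheory.variance_le_sq_of_bounded (a := -M) (b := M)
        (ae_of_all _ fun x => abs_le.1 (g.norm_coe_le_norm x))
        g.continuous.measurable.aemeasurable).trans (le_of_eq (by ring))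
    · intro i
      exact memLp_of_bounded (a := -M) (b := M) (ae_of_all _ fun x => abs_le.1 (g.norm_coe_le_norm x))
        g.continuous.aestronglyMeasurable 2
  rw [ProbabilityTheory.variance_eq_integral hSc.measurable.aemeasurable, hmean] at hvar
  set c := ∑ i, ∫ x, g x ∂(ν i) with hc
  have hpt : ∀ y : Fin N → X, |(N : ℝ)⁻¹ * ∑ i, g (y i) - (N : ℝ)⁻¹ * c| ≤
      ((N : ℝ) ^ 2 * (2 * ε))⁻¹ * (S y - c) ^ 2 + ε / 2 := by
    intro y
    have h1 : ∑ i, g (y i) = S y := by simp [S]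
    rw [h1, ← mul_sub, abs_mul, abs_of_pos (inv_pos.2 hNpos), ← sq_abs (S y - c)]
    set a := |S y - c|
    have h2 : ((N : ℝ) ^ 2 * (2 * ε))⁻¹ * a ^ 2 + ε / 2 - (N : ℝ)⁻¹ * a =
        (a * (N : ℝ)⁻¹ - ε) ^ 2 / (2 * ε) := by
      field_simp
      ring
    have h3 : 0 ≤ (a * (N : ℝ)⁻¹ - ε) ^ 2 / (2 * ε) := by positivity
    linarith
  have hi : Integrable (fun y => ((N : ℝ) ^ 2 * (2 * ε))⁻¹ * (S y - c) ^ 2) P :=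
    integ _ (by fun_prop)
  calc _ ≤ ∫ y, (((N : ℝ) ^ 2 * (2 * ε))⁻¹ * (S y - c) ^ 2 + ε / 2) ∂P := by
        refine integral_mono (integ _ ?_) (hi.add (integrable_const _)) hpt
        fun_prop
    _ = ((N : ℝ) ^ 2 * (2 * ε))⁻¹ * ∫ y, (S y - c) ^ 2 ∂P + ε / 2 := by
        rw [integral_add hi (integrable_const _), integral_const_mul]
        simp
    _ ≤ ((N : ℝ) ^ 2 * (2 * ε))⁻¹ * (N * (N * ε ^ 2)) + ε / 2 := by
        gcongr
        exact hvar.trans (by gcongr)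
    _ = ε := by
        field_simp
        ring

lemma lln {ε : ℝ} (hε : 0 < ε) : ∃ N0 : ℕ, 0 < N0 ∧ ∀ N ≥ N0,
    ∀ ν : Fin N → Measure X, (∀ i, IsProbabilityMeasure (ν i)) → ∀ m : ProbabilityMeasure X,
    (∀ g : X → ℝ, Continuous g →
      ∫ x, g x ∂(m : Measure X) = (N : ℝ)⁻¹ * ∑ i, ∫ x, g x ∂(ν i)) →
    ∫ y, W1 (emp N y) m ∂(Measure.pi ν) ≤ ε := by
  obtain ⟨s, hs⟩ := net (X := X) (half_pos hε)
  have he : 0 < ε / (2 * (s.card + 1)) := by positivity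
  choose N1 hN1 hN1' using fun g : C(X, ℝ) => lln1 g he
  refine ⟨s.sup N1 + 1, by positivity, fun N hN ν hν m hm => ?_⟩
  have hN0 : N ≠ 0 := by omega
  have hcont : Continuous fun y : Fin N → X => W1 (emp N y) m :=
    W1_continuous.comp ((emp_continuous hN0).prodMk continuous_const)
  have hI : ∀ g : C(X, ℝ), Integrable (fun y : Fin N → X =>
      |(N : ℝ)⁻¹ * ∑ i, g (y i) - (N : ℝ)⁻¹ * ∑ i, ∫ x, g x ∂(ν i)|) (Measure.pi ν) :=
    fun g => integ _ (by fun_prop)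
  calc _ ≤ ∫ y, (ε / 2 + ∑ g ∈ s,
        |(N : ℝ)⁻¹ * ∑ i, g (y i) - (N : ℝ)⁻¹ * ∑ i, ∫ x, g x ∂(ν i)|) ∂(Measure.pi ν) := by
        refine integral_mono (integ _ hcont) ((integrable_const _).add
          (integrable_finsetSum _ fun g _ => hI g)) fun y => ?_
        refine (hs _ _).trans (le_of_eq ?_)
        simp only [emp_int hN0 _ (ContinuousMap.continuous _), hm _ (ContinuousMap.continuous _)]
    _ = ε / 2 + ∑ g ∈ s, ∫ y,
        |(N : ℝ)⁻¹ * ∑ i, g (y i) - (N : ℝ)⁻¹ * ∑ i, ∫ x, g x ∂(ν i)| ∂(Measure.pi ν) := by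
        rw [integral_add (integrable_const _) (integrable_finsetSum _ fun g _ => hI g),
          integral_finsetSum _ fun g _ => hI g]
        simp
    _ ≤ ε / 2 + s.card • (ε / (2 * (s.card + 1))) := by
        gcongr
        refine Finset.sum_le_card_nsmul _ _ _ fun g hg => ?_
        refine hN1' g N ?_ ν hν
        have := Finset.le_sup (f := N1) hg
        omega
    _ ≤ ε := by
        rw [nsmul_eq_mul]
        have : (s.card : ℝ) * (ε / (2 * (s.card + 1))) ≤ ε / 2 := by
          rw [mul_div_assoc', div_le_div_iff₀ (by positivity) (by positivity)]
          nlinarith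
        linarith

end lln
end MFC

namespace MFC

section mix
variable {X : Type*} [MetricSpace X] [CompactSpace X] [MeasurableSpace X] [BorelSpace X]

lemma mix (μ ν : ProbabilityMeasure X) {s : ℝ} (h0 : 0 ≤ s) (h1 : s ≤ 1) :
    ∃ m : ProbabilityMeasure X, ∀ g : X → ℝ, Continuous g →
      ∫ x, g x ∂(m : Measure X) =
        (1 - s) * ∫ x, g x ∂(μ : Measure X) + s * ∫ x, g x ∂(ν : Measure X) := by
  refine ⟨⟨ENNReal.ofReal (1 - s) • (μ : Measure X) + ENNReal.ofReal s • (ν : Measure X), ?_⟩, ?_⟩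
  · constructor
    simp only [Measure.add_apply, Measure.smul_apply, measure_univ, smul_eq_mul, mul_one]
    rw [← ENNReal.ofReal_add (by linarith) h0]
    simp
  · intro g hg
    rw [ProbabilityMeasure.coe_mk, integral_add_measure
      ((integ _ hg).smul_measure ENNReal.ofReal_ne_top)
      ((integ _ hg).smul_measure ENNReal.ofReal_ne_top), integral_smul_measure,
      integral_smul_measure, ENNReal.toReal_ofReal (by linarith), ENNReal.toReal_ofReal h0]
    simp

lemma unif (F : Set (ProbabilityMeasure X → ℝ))
    (hF : ∀ ε > (0 : ℝ), ∀ μ : ProbabilityMeasure X, ∃ δ > (0 : ℝ),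
      ∀ ν : ProbabilityMeasure X, W1 μ ν < δ → ∀ f ∈ F, |f μ - f ν| < ε) {ε : ℝ} (hε : 0 < ε) :
    ∃ δ > 0, ∀ μ ν : ProbabilityMeasure X, W1 μ ν < δ → ∀ f ∈ F, |f μ - f ν| ≤ ε := by
  choose δ hδ hδ' using hF (ε / 2) (half_pos hε)
  obtain ⟨t, ht⟩ := (isCompact_univ (X := ProbabilityMeasure X)).elim_finite_subcover
    (fun μ => {ν | W1 μ ν < δ μ / 2})
    (fun μ => isOpen_lt (W1_continuous.comp (continuous_const.prodMk continuous_id))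
      continuous_const)
    (fun μ _ => Set.mem_iUnion.2 ⟨μ, by
      change W1 μ μ < _
      rw [W1_self]; exact half_pos (hδ μ)⟩)
  rcases t.eq_empty_or_nonempty with he | hne
  · refine ⟨1, one_pos, fun μ => ?_⟩
    have := ht (Set.mem_univ μ)
    simp [he] at this
  · refine ⟨t.inf' hne fun μ => δ μ / 2, ?_, fun μ ν h f hf => ?_⟩
    · rw [gt_iff_lt, Finset.lt_inf'_iff]
      exact fun μ _ => half_pos (hδ μ)
    · obtain ⟨ξ, hξ, hμ⟩ := Set.mem_iUnion₂.1 (ht (Set.mem_univ μ))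
      change W1 ξ μ < δ ξ / 2 at hμ
      have h2 : W1 μ ν < δ ξ / 2 := lt_of_lt_of_le h (Finset.inf'_le _ hξ)
      have h3 := W1_triangle ξ μ ν
      have a := abs_lt.1 (hδ' ξ μ (by linarith [hδ ξ]) f hf)
      have b := abs_lt.1 (hδ' ξ ν (by linarith) f hf)
      rw [abs_le]; constructor <;> linarith

lemma lin_mod (F : Set (ProbabilityMeasure X → ℝ))
    (hF : ∀ ε > (0 : ℝ), ∀ μ : ProbabilityMeasure X, ∃ δ > (0 : ℝ),
      ∀ ν : ProbabilityMeasure X, W1 μ ν < δ → ∀ f ∈ F, |f μ - f ν| < ε) {ε : ℝ} (hε : 0 < ε) :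
    ∃ C > 0, ∀ μ ν : ProbabilityMeasure X, ∀ f ∈ F, |f μ - f ν| ≤ ε + C * W1 μ ν := by
  obtain ⟨δ, hδ, h⟩ := unif F hF hε
  refine ⟨ε / δ, by positivity, fun μ ν f hf => ?_⟩
  let n : ℕ := ⌊W1 μ ν / δ⌋₊ + 1
  have hn : W1 μ ν / δ < n := by simpa [n] using Nat.lt_floor_add_one (W1 μ ν / δ)
  have hn' : (n : ℝ) ≤ W1 μ ν / δ + 1 := by
    have := Nat.floor_le (div_nonneg (W1_nonneg μ ν) hδ.le)
    simp only [n, Nat.cast_add, Nat.cast_one]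
    linarith
  have hnpos : (0 : ℝ) < n := by simp only [n]; positivity
  have hex : ∀ k : ℕ, ∃ m : ProbabilityMeasure X, k ≤ n → ∀ g : X → ℝ, Continuous g →
      ∫ x, g x ∂(m : Measure X) =
        (1 - k / n) * ∫ x, g x ∂(μ : Measure X) + k / n * ∫ x, g x ∂(ν : Measure X) := by
    intro k
    by_cases hk : k ≤ n
    · obtain ⟨m, hm⟩ := mix μ ν (s := k / n) (by positivity)
        (by rw [div_le_one hnpos]; exact_mod_cast hk)
      exact ⟨m, fun _ => hm⟩
    · exact ⟨μ, fun h => absurd h hk⟩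
  choose m hm using hex
  have m0 : m 0 = μ := eq_of_W1 (le_antisymm (W1_le fun g hg => by
    rw [hm 0 (Nat.zero_le _) g hg.continuous]; simp) (W1_nonneg _ _))
  have mn : m n = ν := eq_of_W1 (le_antisymm (W1_le fun g hg => by
    rw [hm n le_rfl g hg.continuous, div_self hnpos.ne']; simp) (W1_nonneg _ _))
  have step : ∀ k, k + 1 ≤ n → W1 (m k) (m (k + 1)) < δ := fun k hk => by
    refine lt_of_le_of_lt (b := (n : ℝ)⁻¹ * W1 μ ν) (W1_le fun g hg => ?_) ?_
    · rw [hm k (by omega) g hg.continuous, hm (k + 1) hk g hg.continuous]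
      have : ∀ a b : ℝ, (1 - (k : ℝ) / n) * a + k / n * b -
          ((1 - ((k + 1 : ℕ) : ℝ) / n) * a + ((k + 1 : ℕ) : ℝ) / n * b) =
          (n : ℝ)⁻¹ * (a - b) := by
        intro a b
        push_cast
        field_simp
        ring
      rw [this, abs_mul, abs_of_pos (inv_pos.2 hnpos)]
      gcongr
      exact le_W1 hg μ ν
    · rw [inv_mul_lt_iff₀ hnpos]
      rwa [div_lt_iff₀ hδ] at hn
  have ind : ∀ k, k ≤ n → |f μ - f (m k)| ≤ k * ε := by
    intro k
    induction k with
    | zero => intro _; simp [m0]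
    | succ k ih =>
      intro hk
      have a := ih (by omega)
      have b := h _ _ (step k hk) f hf
      have c := abs_sub_le (f μ) (f (m k)) (f (m (k + 1)))
      push_cast
      linarith
  have := ind n le_rfl
  rw [mn] at this
  refine this.trans ?_
  have e : (W1 μ ν / δ + 1) * ε = ε + ε / δ * W1 μ ν := by ring
  rw [← e]
  gcongr

end mix

section step
variable {X U : Type*}
    [MetricSpace X] [CompactSpace X] [MeasurableSpace X] [BorelSpace X] [Nonempty X]
    [MetricSpace U] [CompactSpace U] [MeasurableSpace U] [BorelSpace U]

/-- Lipschitz policies -/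
def IsLip (L : ℝ) (Q : X → ProbabilityMeasure X → ProbabilityMeasure U) : Prop :=
  ∀ (x x' : X) (μ μ' : ProbabilityMeasure X) (g : U → ℝ), LipschitzWith 1 g →
      |∫ u, g u ∂(Q x μ : Measure U) - ∫ u, g u ∂(Q x' μ' : Measure U)|
        ≤ L * (dist x x' + W1 μ μ')

variable {p : X → U → ProbabilityMeasure X → ProbabilityMeasure X}
    {L : ℝ}

lemma hcont
    (hp : Continuous fun z : X × U × ProbabilityMeasure X => p z.1 z.2.1 z.2.2) {g : X → ℝ} (hg : Continuous g) :
    Continuous fun z : X × U × ProbabilityMeasure X =>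
      ∫ y, g y ∂(p z.1 z.2.1 z.2.2 : Measure X) :=
  cont_integral hp hg

lemma hcontu
    (hp : Continuous fun z : X × U × ProbabilityMeasure X => p z.1 z.2.1 z.2.2) {g : X → ℝ} (hg : Continuous g) (x : X) (μ : ProbabilityMeasure X) :
    Continuous fun u => ∫ y, g y ∂(p x u μ : Measure X) :=
  (hcont hp hg).comp (continuous_const.prodMk (continuous_id.prodMk continuous_const))

lemma pmeas
    (hp : Continuous fun z : X × U × ProbabilityMeasure X => p z.1 z.2.1 z.2.2) (x : X) (μ : ProbabilityMeasure X) : Measurable fun u => (p x u μ : Measure X) :=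
  meas_of_cont (hp.comp (continuous_const.prodMk (continuous_id.prodMk continuous_const)))

lemma Hmod
    (hp : Continuous fun z : X × U × ProbabilityMeasure X => p z.1 z.2.1 z.2.2)
    (hL : 0 < L) {g : X → ℝ} (hg : Continuous g) {ε : ℝ} (hε : 0 < ε) :
    ∃ C > 0, ∀ Q : X → ProbabilityMeasure X → ProbabilityMeasure U, IsLip L Q →
      ∀ x x' μ ν,
      |∫ u, ∫ y, g y ∂(p x u μ : Measure X) ∂(Q x μ : Measure U) -
        ∫ u, ∫ y, g y ∂(p x' u ν : Measure X) ∂(Q x' ν : Measure U)| ≤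
      ε + C * (dist x x' + W1 μ ν) := by
  obtain ⟨C, hC, h⟩ := modulus (hcont hp hg)
    (ρ := fun a b => dist a.1 b.1 + dist a.2.1 b.2.1 + W1 a.2.2 b.2.2)
    (by
      have hw : Continuous fun z : (X × U × ProbabilityMeasure X) × (X × U × ProbabilityMeasure X)
          => W1 z.1.2.2 z.2.2.2 := W1_continuous.comp (f := fun z :
            (X × U × ProbabilityMeasure X) × (X × U × ProbabilityMeasure X) =>
              (z.1.2.2, z.2.2.2)) (by fun_prop)
      exact Continuous.add (by fun_prop) hw)
    (fun a b => add_nonneg (by positivity) (W1_nonneg _ _))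
    (fun a b hab => by
      have h1 := W1_nonneg a.2.2 b.2.2
      have h2 := dist_nonneg (x := a.1) (y := b.1)
      have h3 := dist_nonneg (x := a.2.1) (y := b.2.1)
      have e1 : a.1 = b.1 := dist_eq_zero.1 (by linarith)
      have e2 : a.2.1 = b.2.1 := dist_eq_zero.1 (by linarith)
      have e3 : a.2.2 = b.2.2 := eq_of_W1 (by linarith)
      rw [e1, e2, e3])
    (show 0 < ε / 3 by positivity)
  refine ⟨C * (1 + L), by positivity, fun Q hQ x x' μ ν => ?_⟩
  have a : |∫ u, ∫ y, g y ∂(p x u μ : Measure X) ∂(Q x μ : Measure U) -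
      ∫ u, ∫ y, g y ∂(p x' u ν : Measure X) ∂(Q x μ : Measure U)| ≤
      ε / 3 + C * (dist x x' + W1 μ ν) := by
    refine abs_int_sub_le _ (integ _ (hcontu hp hg _ _)) (integ _ (hcontu hp hg _ _)) fun u => ?_
    have := h (x, u, μ) (x', u, ν)
    simpa using this
  have b := approx_lip (hcontu hp hg x' ν) hC (ε := ε / 3)
    (fun u u' => by simpa [W1_self] using h (x', u, ν) (x', u', ν)) (Q x μ) (Q x' ν)
    (fun f hf => hQ x x' μ ν f hf)
  refine (abs_sub_le _ _ _).trans ((add_le_add a b).trans (le_of_eq (by ring)))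

/-- bundling -/
def mkP (m : Measure X) (h : IsProbabilityMeasure m) : ProbabilityMeasure X := ⟨m, h⟩

lemma mkP_coe (m : Measure X) (h : IsProbabilityMeasure m) : (mkP m h : Measure X) = m := rfl

/-- one-agent kernel -/
noncomputable def ker (p : X → U → ProbabilityMeasure X → ProbabilityMeasure X)
    (Q : X → ProbabilityMeasure X → ProbabilityMeasure U) (x : X) (μ : ProbabilityMeasure X) :
    Measure X :=
  (Q x μ : Measure U).bind fun u => (p x u μ : Measure X)

lemma ker_prob
    (hp : Continuous fun z : X × U × ProbabilityMeasure X => p z.1 z.2.1 z.2.2) (Q : X → ProbabilityMeasure X → ProbabilityMeasure U) (x : X)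
    (μ : ProbabilityMeasure X) : IsProbabilityMeasure (ker p Q x μ) :=
  bind_prob _ (pmeas hp x μ)

lemma ker_int
    (hp : Continuous fun z : X × U × ProbabilityMeasure X => p z.1 z.2.1 z.2.2) (Q : X → ProbabilityMeasure X → ProbabilityMeasure U) (x : X)
    (μ : ProbabilityMeasure X) {g : X → ℝ} (hg : Continuous g) :
    ∫ y, g y ∂(ker p Q x μ) =
      ∫ u, ∫ y, g y ∂(p x u μ : Measure X) ∂(Q x μ : Measure U) := by
  have := ker_prob hp Q x μ
  exact ibind _ (pmeas hp x μ) (integ (ker p Q x μ) hg)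

lemma ker_int_cont
    (hp : Continuous fun z : X × U × ProbabilityMeasure X => p z.1 z.2.1 z.2.2)
    (hL : 0 < L) {Q : X → ProbabilityMeasure X → ProbabilityMeasure U} (hQ : IsLip L Q)
    {g : X → ℝ} (hg : Continuous g) :
    Continuous fun z : X × ProbabilityMeasure X => ∫ y, g y ∂(ker p Q z.1 z.2) := by
  simp only [ker_int hp Q _ _ hg]
  rw [continuous_iff_continuousAt]
  intro z
  rw [Metric.continuousAt_iff']
  intro e he
  obtain ⟨C, hC, h⟩ := Hmod hp hL hg (half_pos he)
  have h1 : Continuous fun w : X × ProbabilityMeasure X => C * (dist w.1 z.1 + W1 w.2 z.2) :=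
    continuous_const.mul ((by fun_prop : Continuous fun w : X × ProbabilityMeasure X =>
      dist w.1 z.1).add (W1_continuous.comp (continuous_snd.prodMk continuous_const)))
  have h2 := h1.tendsto z
  simp only [dist_self, W1_self, add_zero, mul_zero] at h2
  filter_upwards [h2.eventually (gt_mem_nhds (half_pos he))] with w hw
  rw [Real.dist_eq]
  have := h Q hQ w.1 z.1 w.2 z.2
  linarith

lemma ker_cont
    (hp : Continuous fun z : X × U × ProbabilityMeasure X => p z.1 z.2.1 z.2.2)
    (hL : 0 < L) {Q : X → ProbabilityMeasure X → ProbabilityMeasure U} (hQ : IsLip L Q) :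
    Continuous fun z : X × ProbabilityMeasure X =>
      mkP (ker p Q z.1 z.2) (ker_prob hp Q z.1 z.2) := by
  rw [ProbabilityMeasure.continuous_iff_forall_continuousMap_continuous_integral]
  intro g
  exact ker_int_cont hp hL hQ g.continuous

lemma ker_meas
    (hp : Continuous fun z : X × U × ProbabilityMeasure X => p z.1 z.2.1 z.2.2)
    (hL : 0 < L) {Q : X → ProbabilityMeasure X → ProbabilityMeasure U} (hQ : IsLip L Q)
    (μ : ProbabilityMeasure X) : Measurable fun x => ker p Q x μ :=
  meas_of_cont ((ker_cont hp hL hQ).comp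
    (f := fun x : X => (x, μ)) (continuous_id.prodMk continuous_const))

lemma pi_ker_meas
    (hp : Continuous fun z : X × U × ProbabilityMeasure X => p z.1 z.2.1 z.2.2)
    (hL : 0 < L) {Q : X → ProbabilityMeasure X → ProbabilityMeasure U} (hQ : IsLip L Q)
    {N : ℕ} (hN : N ≠ 0) :
    Measurable fun x : Fin N → X => Measure.pi fun i => ker p Q (x i) (emp N x) := by
  have : ∀ (x : Fin N → X) (i : Fin N), IsProbabilityMeasure (ker p Q (x i) (emp N x)) :=
    fun x i => ker_prob hp Q _ _
  refine pi_meas fun i => ?_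
  exact meas_of_cont ((ker_cont hp hL hQ).comp
    (f := fun x : Fin N → X => (x i, emp N x)) ((continuous_apply i).prodMk (emp_continuous hN)))

/-- mean field operator -/
noncomputable def T (p : X → U → ProbabilityMeasure X → ProbabilityMeasure X)
    (Q : X → ProbabilityMeasure X → ProbabilityMeasure U) (μ : ProbabilityMeasure X) :
    Measure X :=
  (μ : Measure X).bind fun x => ker p Q x μ

lemma T_prob
    (hp : Continuous fun z : X × U × ProbabilityMeasure X => p z.1 z.2.1 z.2.2)
    (hL : 0 < L) {Q : X → ProbabilityMeasure X → ProbabilityMeasure U} (hQ : IsLip L Q)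
    (μ : ProbabilityMeasure X) : IsProbabilityMeasure (T p Q μ) :=
  have : ∀ x, IsProbabilityMeasure (ker p Q x μ) := fun x => ker_prob hp Q x μ
  bind_prob _ (ker_meas hp hL hQ μ)

lemma T_int
    (hp : Continuous fun z : X × U × ProbabilityMeasure X => p z.1 z.2.1 z.2.2)
    (hL : 0 < L) {Q : X → ProbabilityMeasure X → ProbabilityMeasure U} (hQ : IsLip L Q)
    (μ : ProbabilityMeasure X) {g : X → ℝ} (hg : Continuous g) :
    ∫ y, g y ∂(T p Q μ) = ∫ x, ∫ y, g y ∂(ker p Q x μ) ∂(μ : Measure X) := by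
  have : ∀ x, IsProbabilityMeasure (ker p Q x μ) := fun x => ker_prob hp Q x μ
  have := T_prob hp hL hQ μ
  exact ibind _ (ker_meas hp hL hQ μ) (integ (T p Q μ) hg)

lemma T_mod1
    (hp : Continuous fun z : X × U × ProbabilityMeasure X => p z.1 z.2.1 z.2.2)
    (hL : 0 < L) {g : X → ℝ} (hg : Continuous g) {ε : ℝ} (hε : 0 < ε) :
    ∃ C > 0, ∀ Q : X → ProbabilityMeasure X → ProbabilityMeasure U, IsLip L Q →
      ∀ μ ν, |∫ y, g y ∂(T p Q μ) - ∫ y, g y ∂(T p Q ν)| ≤ ε + C * W1 μ ν := by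
  obtain ⟨C, hC, h⟩ := Hmod hp hL hg (show 0 < ε / 3 by positivity)
  refine ⟨2 * C, by positivity, fun Q hQ μ ν => ?_⟩
  rw [T_int hp hL hQ μ hg, T_int hp hL hQ ν hg]
  have hc : ∀ m, Continuous fun x => ∫ y, g y ∂(ker p Q x m) := fun m =>
    (ker_int_cont hp hL hQ hg).comp
      (f := fun x : X => (x, m)) (continuous_id.prodMk continuous_const)
  have a : |∫ x, ∫ y, g y ∂(ker p Q x μ) ∂(μ : Measure X) -
      ∫ x, ∫ y, g y ∂(ker p Q x ν) ∂(μ : Measure X)| ≤ ε / 3 + C * W1 μ ν := by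
    refine abs_int_sub_le _ (integ _ (hc _)) (integ _ (hc _)) fun x => ?_
    rw [ker_int hp Q _ _ hg, ker_int hp Q _ _ hg]
    simpa using h Q hQ x x μ ν
  have b := approx_lip (hc ν) hC (ε := ε / 3) (fun x x' => by
    rw [ker_int hp Q _ _ hg, ker_int hp Q _ _ hg]
    simpa [W1_self] using h Q hQ x x' ν ν) μ ν (fun f hf => le_W1 hf μ ν)
  refine (abs_sub_le _ _ _).trans ((add_le_add a b).trans (le_of_eq (by ring)))

lemma T_mod
    (hp : Continuous fun z : X × U × ProbabilityMeasure X => p z.1 z.2.1 z.2.2)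
    (hL : 0 < L) {ε : ℝ} (hε : 0 < ε) :
    ∃ C > 0, ∀ (Q : X → ProbabilityMeasure X → ProbabilityMeasure U) (hQ : IsLip L Q),
      ∀ μ ν, W1 (mkP (T p Q μ) (T_prob hp hL hQ μ)) (mkP (T p Q ν) (T_prob hp hL hQ ν)) ≤ ε + C * W1 μ ν := by
  obtain ⟨s, hs⟩ := net (X := X) (half_pos hε)
  have he : 0 < ε / (2 * (s.card + 1)) := by positivity
  choose C hC h using fun g : C(X, ℝ) => T_mod1 hp hL g.continuous he
  refine ⟨∑ g ∈ s, C g + 1, add_pos_of_nonneg_of_pos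
    (Finset.sum_nonneg fun g _ => (hC g).le) one_pos, fun Q hQ μ ν => ?_⟩
  refine (hs _ _).trans ?_
  calc _ ≤ ε / 2 + ∑ g ∈ s, (ε / (2 * (s.card + 1)) + C g * W1 μ ν) := by
        gcongr with g _
        exact h g Q hQ μ ν
    _ ≤ _ := by
        rw [Finset.sum_add_distrib, Finset.sum_const, nsmul_eq_mul, ← Finset.sum_mul]
        have : (s.card : ℝ) * (ε / (2 * (s.card + 1))) ≤ ε / 2 := by
          rw [mul_div_assoc', div_le_div_iff₀ (by positivity) (by positivity)]
          nlinarith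
        have := W1_nonneg μ ν
        linarith

end step
end MFC

namespace MFC

section main
variable {X U : Type*}
    [MetricSpace X] [CompactSpace X] [MeasurableSpace X] [BorelSpace X] [Nonempty X]
    [MetricSpace U] [CompactSpace U] [MeasurableSpace U] [BorelSpace U]
    {p : X → U → ProbabilityMeasure X → ProbabilityMeasure X}
    {L : ℝ}

lemma law_succ (q : ℕ → X → ProbabilityMeasure X → ProbabilityMeasure U)
    (μ0 : ProbabilityMeasure X) (N t : ℕ) :
    mfcLawN p q μ0 N (t + 1) = (mfcLawN p q μ0 N t).bind fun x =>
      Measure.pi fun i => ker p (q t) (x i) (emp N x) := rfl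

lemma law_prob
    (hp : Continuous fun z : X × U × ProbabilityMeasure X => p z.1 z.2.1 z.2.2)
    (hL : 0 < L) {q : ℕ → X → ProbabilityMeasure X → ProbabilityMeasure U}
    (hq : ∀ t, IsLip L (q t)) (μ0 : ProbabilityMeasure X) {N : ℕ} (hN : N ≠ 0) (t : ℕ) :
    IsProbabilityMeasure (mfcLawN p q μ0 N t) := by
  induction t with
  | zero =>
    change IsProbabilityMeasure (Measure.pi fun _ => (μ0 : Measure X))
    infer_instance
  | succ t ih =>
    rw [law_succ]
    have : ∀ (x : Fin N → X) (i : Fin N), IsProbabilityMeasure (ker p (q t) (x i) (emp N x)) :=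
      fun x i => ker_prob hp _ _ _
    exact bind_prob _ (pi_ker_meas hp hL (hq t) hN)

lemma W1_emp_cont {N : ℕ} (hN : N ≠ 0) (m : ProbabilityMeasure X) :
    Continuous fun y : Fin N → X => W1 (emp N y) m :=
  W1_continuous.comp ((emp_continuous hN).prodMk continuous_const)

lemma chaos
    (hp : Continuous fun z : X × U × ProbabilityMeasure X => p z.1 z.2.1 z.2.2)
    (hL : 0 < L) (Pi : Set (ℕ → X → ProbabilityMeasure X → ProbabilityMeasure U))
    (hPi : ∀ q ∈ Pi, ∀ t, IsLip L (q t)) (μ0 : ProbabilityMeasure X)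
    (mf : (ℕ → X → ProbabilityMeasure X → ProbabilityMeasure U) → ℕ → ProbabilityMeasure X)
    (hmf0 : ∀ q, mf q 0 = μ0)
    (hmf : ∀ q ∈ Pi, ∀ t : ℕ, (mf q (t + 1) : Measure X) = T p (q t) (mf q t)) (t : ℕ) :
    ∀ ε > (0 : ℝ), ∃ N0 : ℕ, 0 < N0 ∧ ∀ N ≥ N0, ∀ q ∈ Pi,
      ∫ x, W1 (emp N x) (mf q t) ∂(mfcLawN p q μ0 N t) ≤ ε := by
  induction t with
  | zero =>
    intro ε hε
    obtain ⟨N0, h0, h⟩ := lln (X := X) hε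
    refine ⟨N0, h0, fun N hN q hq => ?_⟩
    refine h N hN (fun _ => (μ0 : Measure X)) (fun _ => inferInstance) (mf q 0) fun g hg => ?_
    have hN' : (N : ℝ) ≠ 0 := by
      have : N ≠ 0 := by omega
      exact_mod_cast this
    rw [hmf0]
    simp [hN']
  | succ t ih =>
    intro ε hε
    obtain ⟨N1, h1, h⟩ := lln (X := X) (show 0 < ε / 3 by positivity)
    obtain ⟨C, hC, hT⟩ := T_mod hp hL (show 0 < ε / 3 by positivity)
    obtain ⟨N2, h2, h'⟩ := ih (ε / (3 * C)) (by positivity)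
    refine ⟨max N1 N2, by positivity, fun N hN q hq => ?_⟩
    have hN1 : N1 ≤ N := le_trans (le_max_left _ _) hN
    have hN2 : N2 ≤ N := le_trans (le_max_right _ _) hN
    have hN0 : N ≠ 0 := by omega
    have hN' : (N : ℝ) ≠ 0 := by exact_mod_cast hN0
    have hQ := hPi q hq t
    have hker : ∀ (x : Fin N → X) (i : Fin N),
        IsProbabilityMeasure (ker p (q t) (x i) (emp N x)) := fun x i => ker_prob hp _ _ _
    have hlaw := law_prob hp hL (hPi q hq) μ0 hN0 t
    have hlaw' := law_prob hp hL (hPi q hq) μ0 hN0 (t + 1)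
    have hInt := integ (mfcLawN p q μ0 N (t + 1)) (W1_emp_cont hN0 (mf q (t + 1)))
    rw [law_succ] at hInt ⊢
    rw [ibind _ (pi_ker_meas hp hL hQ hN0) hInt]
    have hmfe : mf q (t + 1) = mkP (T p (q t) (mf q t)) (T_prob hp hL hQ (mf q t)) :=
      ProbabilityMeasure.toMeasure_injective (hmf q hq t)
    have hpt : ∀ x : Fin N → X, ∫ y, W1 (emp N y) (mf q (t + 1))
        ∂(Measure.pi fun i => ker p (q t) (x i) (emp N x)) ≤
        2 * ε / 3 + C * W1 (emp N x) (mf q t) := by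
      intro x
      set m := mkP (T p (q t) (emp N x)) (T_prob hp hL hQ (emp N x)) with hm
      have a := h N hN1 (fun i => ker p (q t) (x i) (emp N x)) (hker x) m fun g hg => by
        rw [hm, mkP_coe, T_int hp hL hQ _ hg, emp_int hN0]
        exact (ker_int_cont hp hL hQ hg).comp
          (f := fun y : X => (y, emp N x)) (continuous_id.prodMk continuous_const)
      have b := hT (q t) hQ (emp N x) (mf q t)
      rw [← hmfe] at b
      have c : ∫ y, W1 (emp N y) (mf q (t + 1))
          ∂(Measure.pi fun i => ker p (q t) (x i) (emp N x)) ≤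
          ∫ y, (W1 (emp N y) m + W1 m (mf q (t + 1)))
          ∂(Measure.pi fun i => ker p (q t) (x i) (emp N x)) :=
        integral_mono (integ _ (W1_emp_cont hN0 _))
          ((integ _ (W1_emp_cont hN0 _)).add (integrable_const _)) fun y => W1_triangle _ _ _
      rw [integral_add (integ _ (W1_emp_cont hN0 _)) (integrable_const _)] at c
      simp only [integral_const, probReal_univ, one_smul] at c
      linarith
    have hi := (integ (mfcLawN p q μ0 N t) (W1_emp_cont hN0 (mf q t))).const_mul C
    have hge : 0 ≤ᵐ[mfcLawN p q μ0 N t] fun x => ∫ y, W1 (emp N y) (mf q (t + 1))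
        ∂(Measure.pi fun i => ker p (q t) (x i) (emp N x)) :=
      ae_of_all _ fun x => integral_nonneg fun y => W1_nonneg _ _
    refine (integral_mono_of_nonneg hge ((integrable_const _).add hi)
      (ae_of_all _ hpt)).trans ?_
    change ∫ x, (2 * ε / 3 + C * W1 (emp N x) (mf q t)) ∂(mfcLawN p q μ0 N t) ≤ ε
    rw [integral_add (integrable_const _) hi, integral_const_mul]
    simp only [integral_const, probReal_univ, one_smul]
    have d := mul_le_mul_of_nonneg_left (h' N hN2 q hq) hC.le
    have e : C * (ε / (3 * C)) = ε / 3 := by field_simp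
    linarith

end main
end MFC

/-- propagation of chaos for deterministic MFC. For compact `𝒳`, `𝒰`, continuous
kernel `p`, an equi-Lipschitz policy class `Π`, and the deterministic limiting mean field
`μ_{t+1} = ∬ p(·|x,u,μ_t) π_t(du|x,μ_t) μ_t(dx)`, for every family `ℱ` of equicontinuous
functions on `𝒫(𝒳)` and every time `t`,
`sup_{π ∈ Π} sup_{f ∈ ℱ} |E[f(μ_t^N)] − f(μ_t)| → 0` as `N → ∞`. -/
theorem statement10 {X U : Type*}
    [MetricSpace X] [CompactSpace X] [MeasurableSpace X] [BorelSpace X] [Nonempty X]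
    [MetricSpace U] [CompactSpace U] [MeasurableSpace U] [BorelSpace U]
    (p : X → U → ProbabilityMeasure X → ProbabilityMeasure X)
    (hp : Continuous fun z : X × U × ProbabilityMeasure X => p z.1 z.2.1 z.2.2)
    (L : ℝ) (hL : 0 < L)
    (Pi : Set (ℕ → X → ProbabilityMeasure X → ProbabilityMeasure U))
    (hPi : ∀ π ∈ Pi, ∀ (t : ℕ) (x x' : X) (μ μ' : ProbabilityMeasure X) (g : U → ℝ),
      LipschitzWith 1 g →
      |∫ u, g u ∂(π t x μ : Measure U) - ∫ u, g u ∂(π t x' μ' : Measure U)|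
        ≤ L * (dist x x' + W1 μ μ'))
    (F : Set (ProbabilityMeasure X → ℝ))
    (hF : ∀ ε > (0 : ℝ), ∀ μ : ProbabilityMeasure X, ∃ δ > (0 : ℝ),
      ∀ ν : ProbabilityMeasure X, W1 μ ν < δ → ∀ f ∈ F, |f μ - f ν| < ε)
    (μ0 : ProbabilityMeasure X)
    (mf : (ℕ → X → ProbabilityMeasure X → ProbabilityMeasure U) → ℕ → ProbabilityMeasure X)
    (hmf0 : ∀ q, mf q 0 = μ0)
    (hmf : ∀ q ∈ Pi, ∀ t : ℕ,
      (mf q (t + 1) : Measure X) = (mf q t : Measure X).bind fun x =>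
        ((q t x (mf q t) : Measure U)).bind fun u => (p x u (mf q t) : Measure X)) :
    ∀ t : ℕ, ∀ ε > (0 : ℝ), ∃ N0 : ℕ, ∀ N ≥ N0, ∀ q ∈ Pi, ∀ f ∈ F,
      |(∫ x, f (emp N x) ∂(mfcLawN p q μ0 N t)) - f (mf q t)| ≤ ε := by
  intro t ε hε
  obtain ⟨C, hC, hmod⟩ := MFC.lin_mod F hF (half_pos hε)
  obtain ⟨N0, h0, h⟩ := MFC.chaos hp hL Pi hPi μ0 mf hmf0 hmf t (ε / (2 * C)) (by positivity)
  refine ⟨N0, fun N hN q hq f hf => ?_⟩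
  have hN0 : N ≠ 0 := by omega
  have hlaw := MFC.law_prob hp hL (hPi q hq) μ0 hN0 t
  have hfc : Continuous f := by
    rw [continuous_iff_continuousAt]
    intro μ
    rw [Metric.continuousAt_iff']
    intro e he
    obtain ⟨δ, hδ, hδ'⟩ := hF e he μ
    filter_upwards [(MFC.W1_tendsto μ).eventually (gt_mem_nhds hδ)] with ν hν
    rw [dist_comm, Real.dist_eq]
    exact hδ' ν hν f hf
  have hfi : Integrable (fun x => f (emp N x)) (mfcLawN p q μ0 N t) :=
    MFC.integ _ (hfc.comp (MFC.emp_continuous hN0))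
  have hi := (MFC.integ (mfcLawN p q μ0 N t) (MFC.W1_emp_cont hN0 (mf q t))).const_mul C
  have h1 : (∫ x, f (emp N x) ∂(mfcLawN p q μ0 N t)) - f (mf q t) =
      ∫ x, (f (emp N x) - f (mf q t)) ∂(mfcLawN p q μ0 N t) := by
    rw [integral_sub hfi (integrable_const _)]
    simp
  rw [h1]
  refine (abs_integral_le_integral_abs).trans ?_
  refine (integral_mono (hfi.sub (integrable_const _)).abs ((integrable_const (ε / 2)).add hi)
    fun x => hmod (emp N x) (mf q t) f hf).trans ?_
  change ∫ x, (ε / 2 + C * W1 (emp N x) (mf q t)) ∂(mfcLawN p q μ0 N t) ≤ ε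
  rw [integral_add (integrable_const _) hi, integral_const_mul]
  simp only [integral_const, probReal_univ, one_smul]
  have d := mul_le_mul_of_nonneg_left (h N hN q hq) hC.le
  have e : C * (ε / (2 * C)) = ε / 2 := by field_simp
  linarith
end

section
/- (Approximate optimality of MFC solutions, deterministic MFC.) Let 𝒳, 𝒰 be compact metric spaces, p and r continuous, γ ∈ (0,1), and Π an equi-Lipschitz class of policies. If π* is an optimal deterministic MFC policy, i.e., π* ∈ argmax_{π̂} J(π̂) over MFC policies, then the induced finite-agent policy Φ(π*) ∈ Π is ε-optimal in the N-agent system: J^N(Φ(π*)) ≥ sup_{π ∈ Π} J^N(π) − ε, where ε = ε(N) → 0 as N → ∞. -/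
open MeasureTheory Filter Topology

/-- The action set `ℋ(μ)`: joint distributions on `𝒳 × 𝒰` with first marginal `μ`. -/
def Hset {X U : Type*} [MeasurableSpace X] [MeasurableSpace U]
    (μ : ProbabilityMeasure X) : Set (ProbabilityMeasure (X × U)) :=
  {h | (h : Measure (X × U)).map Prod.fst = (μ : Measure X)}

/-- Deterministic trajectory of the MFC MDP under transition `T` and (time-variant) MFC policy
`pol`, started at `μ0`. -/
noncomputable def mfcTraj {X U : Type*} [MeasurableSpace X] [MeasurableSpace U]
    (T : ProbabilityMeasure X → ProbabilityMeasure (X × U) → ProbabilityMeasure X)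
    (pol : ℕ → ProbabilityMeasure X → ProbabilityMeasure (X × U))
    (μ0 : ProbabilityMeasure X) : ℕ → ProbabilityMeasure X
  | 0 => μ0
  | t + 1 => T (mfcTraj T pol μ0 t) (pol t (mfcTraj T pol μ0 t))

section Aux
set_option linter.unusedSectionVars false
variable {X : Type*} [MetricSpace X] [CompactSpace X] [MeasurableSpace X] [BorelSpace X]

lemma aux_int {Y : Type*} [TopologicalSpace Y] [CompactSpace Y] [MeasurableSpace Y]
    [OpensMeasurableSpace Y] (μ : Measure Y) [IsFiniteMeasure μ] {f : Y → ℝ}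
    (hf : Continuous f) : Integrable f μ :=
  (BoundedContinuousFunction.mkOfCompact ⟨f, hf⟩).integrable μ

lemma aux_cont_integral {Y : Type*} [TopologicalSpace Y] [CompactSpace Y] [MeasurableSpace Y]
    [OpensMeasurableSpace Y] {f : Y → ℝ} (hf : Continuous f) :
    Continuous fun μ : ProbabilityMeasure Y => ∫ x, f x ∂(μ : Measure Y) :=
  ProbabilityMeasure.continuous_integral_continuousMap (⟨f, hf⟩ : C(Y, ℝ))

lemma aux_abs_integral_le {Y : Type*} [MeasurableSpace Y]
    (μ : Measure Y) [IsProbabilityMeasure μ] {f : Y → ℝ} {c : ℝ}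
    (h : ∀ y, |f y| ≤ c) : |∫ y, f y ∂μ| ≤ c := by
  have := norm_integral_le_of_norm_le_const (μ := μ) (f := f) (C := c) (ae_of_all _ h)
  simpa using this

/-- The difference of integrals against two different probability measures, shifted functions -/
lemma aux_diff_le (μ ν : ProbabilityMeasure X) {f g : X → ℝ} (hf : Continuous f)
    (hg : Continuous g) {c e : ℝ} (h : ∀ x, |f x - c - g x| ≤ e) :
    |∫ x, f x ∂(μ : Measure X) - ∫ x, f x ∂(ν : Measure X)|
      ≤ 2 * e + |∫ x, g x ∂(μ : Measure X) - ∫ x, g x ∂(ν : Measure X)| := by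
  have key : ∀ μ : ProbabilityMeasure X, |∫ x, f x ∂(μ : Measure X) - c -
      ∫ x, g x ∂(μ : Measure X)| ≤ e := by
    intro μ
    have := aux_abs_integral_le (μ : Measure X) h
    have e1 : ∫ y, (f y - c - g y) ∂(μ : Measure X) = ∫ y, (f y - c) ∂(μ : Measure X)
        - ∫ y, g y ∂(μ : Measure X) :=
      integral_sub (aux_int _ (hf.sub continuous_const)) (aux_int _ hg)
    have e2 : ∫ y, (f y - c) ∂(μ : Measure X) = ∫ y, f y ∂(μ : Measure X)
        - ∫ y, c ∂(μ : Measure X) := integral_sub (aux_int _ hf) (integrable_const _)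
    rw [e1, e2] at this
    simpa using this
  have h1 := key μ
  have h2 := key ν
  rw [abs_le] at h1 h2 ⊢
  have h3 := neg_abs_le (∫ x, g x ∂(μ : Measure X) - ∫ x, g x ∂(ν : Measure X))
  have h4 := le_abs_self (∫ x, g x ∂(μ : Measure X) - ∫ x, g x ∂(ν : Measure X))
  constructor <;> linarith

lemma aux_lip_dist {f : X → ℝ} (hf : LipschitzWith 1 f) (x y : X) : |f x - f y| ≤ dist x y := by
  simpa [Real.dist_eq] using hf.dist_le_mul x y

lemma W1_bdd (μ ν : ProbabilityMeasure X) :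
    BddAbove (Set.range fun f : {f : X → ℝ // LipschitzWith 1 f} =>
      |∫ x, (f : X → ℝ) x ∂(μ : Measure X) - ∫ x, (f : X → ℝ) x ∂(ν : Measure X)|) := by
  obtain ⟨x0⟩ := μ.nonempty
  refine ⟨2 * Metric.diam (Set.univ : Set X), ?_⟩
  rintro _ ⟨⟨f, hf⟩, rfl⟩
  have := aux_diff_le μ ν hf.continuous (continuous_const (y := (0 : ℝ))) (c := f x0)
    (e := Metric.diam (Set.univ : Set X)) (fun x => by
      rw [sub_zero]
      exact (aux_lip_dist hf x x0).trans
        (Metric.dist_le_diam_of_mem isCompact_univ.isBounded trivial trivial))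
  simpa using this

lemma le_W1 (μ ν : ProbabilityMeasure X) {f : X → ℝ} (hf : LipschitzWith 1 f) :
    |∫ x, f x ∂(μ : Measure X) - ∫ x, f x ∂(ν : Measure X)| ≤ W1 μ ν :=
  le_ciSup (W1_bdd μ ν) ⟨f, hf⟩

lemma W1_le {μ ν : ProbabilityMeasure X} {c : ℝ} (h : ∀ f : X → ℝ, LipschitzWith 1 f →
    |∫ x, f x ∂(μ : Measure X) - ∫ x, f x ∂(ν : Measure X)| ≤ c) : W1 μ ν ≤ c := by
  have : Nonempty {f : X → ℝ // LipschitzWith 1 f} := ⟨⟨fun _ => 0, LipschitzWith.const' 0⟩⟩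
  exact ciSup_le fun f => h f.1 f.2

lemma W1_nonneg (μ ν : ProbabilityMeasure X) : 0 ≤ W1 μ ν :=
  (abs_nonneg _).trans (le_W1 μ ν (LipschitzWith.const' (0 : ℝ)))

lemma W1_self (μ : ProbabilityMeasure X) : W1 μ μ = 0 :=
  le_antisymm (W1_le fun f _ => by simp) (W1_nonneg _ _)

lemma W1_comm (μ ν : ProbabilityMeasure X) : W1 μ ν = W1 ν μ := by
  unfold W1
  congr 1; ext f; rw [abs_sub_comm]

lemma W1_triangle (μ ν ρ : ProbabilityMeasure X) : W1 μ ρ ≤ W1 μ ν + W1 ν ρ := by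
  refine W1_le fun f hf => ?_
  exact (abs_sub_le _ (∫ x, f x ∂(ν : Measure X)) _).trans (add_le_add (le_W1 _ _ hf) (le_W1 _ _ hf))

/-- almost-Lipschitz functions. -/
lemma aux_almostLip (μ ν : ProbabilityMeasure X) {A : ℝ}
    (hA : ∀ g : X → ℝ, LipschitzWith 1 g →
      |∫ x, g x ∂(μ : Measure X) - ∫ x, g x ∂(ν : Measure X)| ≤ A)
    {g : X → ℝ} (hg : Continuous g) {ε K : ℝ} (hK : 0 ≤ K)
    (h : ∀ x y, |g x - g y| ≤ ε + K * dist x y) :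
    |∫ x, g x ∂(μ : Measure X) - ∫ x, g x ∂(ν : Measure X)| ≤ 2 * ε + K * A := by
  obtain ⟨x0⟩ := μ.nonempty
  have hbd : ∀ x, BddBelow (Set.range fun y => g y + K * dist x y) := by
    intro x
    obtain ⟨m, hm⟩ := (isCompact_range hg).bddBelow
    refine ⟨m, ?_⟩
    rintro _ ⟨y, rfl⟩
    have : m ≤ g y := hm ⟨y, rfl⟩
    have := mul_nonneg hK (dist_nonneg (x := x) (y := y))
    simp only; linarith
  have : Nonempty X := ⟨x0⟩
  let G : X → ℝ := fun x => ⨅ y, g y + K * dist x y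
  have hG1 : ∀ x, G x ≤ g x := fun x => (ciInf_le (hbd x) x).trans (by simp)
  have hG2 : ∀ x, g x - ε ≤ G x := fun x => le_ciInf fun y => by
    have := (abs_le.1 (h x y)).2
    linarith
  have hGl : ∀ x x', G x ≤ G x' + K * dist x x' := by
    intro x x'
    rw [← sub_le_iff_le_add]
    refine le_ciInf fun y => ?_
    have h1 : G x ≤ g y + K * dist x y := ciInf_le (hbd x) y
    have h2 := mul_le_mul_of_nonneg_left (dist_triangle x x' y) hK
    linarith
  have hGL : LipschitzWith ⟨K, hK⟩ G := LipschitzWith.of_le_add_mul _ hGl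
  have h1 := aux_diff_le μ ν hg hGL.continuous (c := 0) (e := ε) (fun x => by
    rw [sub_zero, abs_le]; constructor <;> linarith [hG1 x, hG2 x, (abs_nonneg _).trans (h x x)])
  refine h1.trans (add_le_add le_rfl ?_)
  rcases hK.eq_or_lt with h0 | h0
  · have : ∀ x, G x = G x0 := fun x => by
      have h1 := hGl x x0
      have h2 := hGl x0 x
      rw [← h0] at h1 h2
      linarith
    rw [← h0]
    simp [this]
  · have := hA (fun x => K⁻¹ * G x) (LipschitzWith.of_le_add fun x y => by
      have := mul_le_mul_of_nonneg_left (hGl x y) (inv_nonneg.2 hK)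
      rwa [mul_add, inv_mul_cancel_left₀ h0.ne'] at this)
    rw [integral_const_mul, integral_const_mul, ← mul_sub, abs_mul, abs_of_pos (inv_pos.2 h0),
      inv_mul_le_iff₀ h0] at this
    exact this

/-- Finite nets of Lipschitz functions. -/
lemma aux_net [Nonempty X] {ε : ℝ} (hε : 0 < ε) : ∃ s : Finset (X → ℝ), (∀ g ∈ s, Continuous g) ∧
    ∀ f : X → ℝ, LipschitzWith 1 f → ∃ g ∈ s, ∃ c : ℝ, ∀ x, |f x - c - g x| ≤ ε := by
  classical
  obtain ⟨x0⟩ := ‹Nonempty X›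
  let A : Set (BoundedContinuousFunction X ℝ) := {f | f x0 = 0 ∧ ∀ x y, |f x - f y| ≤ dist x y}
  have hA : IsCompact A := by
    refine BoundedContinuousFunction.arzela_ascoli₂
      (Set.Icc (-Metric.diam (Set.univ : Set X)) (Metric.diam (Set.univ : Set X))) isCompact_Icc A
      ?_ ?_ ?_
    · have : A = {f | f x0 = 0} ∩ ⋂ x, ⋂ y, {f | |f x - f y| ≤ dist x y} := by
        ext f; simp [A]
      rw [this]
      have hc : ∀ x, Continuous fun f : BoundedContinuousFunction X ℝ => f x := fun x =>
        continuous_eval_const x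
      refine (isClosed_eq (hc x0) continuous_const).inter ?_
      exact isClosed_iInter fun x => isClosed_iInter fun y =>
        isClosed_le ((hc x).sub (hc y)).abs continuous_const
    · rintro f x ⟨h0, h1⟩
      have := (h1 x x0).trans
        (Metric.dist_le_diam_of_mem isCompact_univ.isBounded trivial trivial)
      rw [h0, sub_zero, abs_le] at this
      exact this
    · refine Metric.equicontinuous_of_continuity_modulus (fun t => t) ?_ _ ?_
      · exact tendsto_id
      · rintro x y ⟨f, hf⟩
        rw [Real.dist_eq]; exact hf.2 x y
  obtain ⟨t, -, htf, ht⟩ := hA.finite_cover_balls hε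
  refine ⟨htf.toFinset.image (fun f : BoundedContinuousFunction X ℝ => (f : X → ℝ)), ?_, ?_⟩
  · intro g hg
    obtain ⟨f, -, hfg⟩ := Finset.mem_image.1 hg
    rw [← hfg]
    exact BoundedContinuousFunction.continuous f
  · intro f hf
    let F : BoundedContinuousFunction X ℝ := BoundedContinuousFunction.mkOfCompact
      ⟨fun x => f x - f x0, hf.continuous.sub continuous_const⟩
    have hF : F ∈ A := ⟨by simp [F], fun x y => by simpa [F] using aux_lip_dist hf x y⟩
    have := ht hF
    simp only [Set.mem_iUnion, Metric.mem_ball] at this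
    obtain ⟨g, hg, hd⟩ := this
    refine ⟨g, Finset.mem_image.2 ⟨g, by simpa using hg, rfl⟩, f x0, fun x => ?_⟩
    have := (BoundedContinuousFunction.dist_coe_le_dist x).trans hd.le
    rw [Real.dist_eq] at this
    exact this

lemma aux_W1_net [Nonempty X] {ε : ℝ} (hε : 0 < ε) : ∃ s : Finset (X → ℝ),
    (∀ g ∈ s, Continuous g) ∧ ∀ μ ν : ProbabilityMeasure X, W1 μ ν ≤ ε +
      ∑ g ∈ s, |∫ x, g x ∂(μ : Measure X) - ∫ x, g x ∂(ν : Measure X)| := by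
  obtain ⟨s, hs, h⟩ := aux_net (X := X) (half_pos hε)
  refine ⟨s, hs, fun μ ν => W1_le fun f hf => ?_⟩
  obtain ⟨g, hg, c, hc⟩ := h f hf
  have := aux_diff_le μ ν hf.continuous (hs g hg) hc
  have h2 := Finset.single_le_sum (f := fun g : X → ℝ =>
    |∫ x, g x ∂(μ : Measure X) - ∫ x, g x ∂(ν : Measure X)|) (fun i _ => abs_nonneg _) hg
  linarith

lemma aux_W1_tendsto (μ : ProbabilityMeasure X) : Tendsto (fun ν => W1 ν μ) (𝓝 μ) (𝓝 0) := by
  have : Nonempty X := μ.nonempty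
  rw [Metric.tendsto_nhds]
  intro ε hε
  obtain ⟨s, hs, h⟩ := aux_W1_net (X := X) (half_pos hε)
  have hc : Continuous fun ν : ProbabilityMeasure X =>
      ∑ g ∈ s, |∫ x, g x ∂(ν : Measure X) - ∫ x, g x ∂(μ : Measure X)| :=
    continuous_finsetSum _ fun g hg => ((aux_cont_integral (hs g hg)).sub continuous_const).abs
  have := hc.tendsto μ
  simp only [sub_self, abs_zero, Finset.sum_const_zero] at this
  filter_upwards [this.eventually (gt_mem_nhds (half_pos hε))] with ν hν
  rw [Real.dist_eq, sub_zero, abs_of_nonneg (W1_nonneg _ _)]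
  linarith [h ν μ]

lemma W1_continuous :
    Continuous fun z : ProbabilityMeasure X × ProbabilityMeasure X => W1 z.1 z.2 := by
  rw [continuous_iff_continuousAt]
  rintro ⟨μ, ν⟩
  rw [ContinuousAt, tendsto_iff_dist_tendsto_zero]
  have h : Tendsto (fun z : ProbabilityMeasure X × ProbabilityMeasure X => W1 z.1 μ + W1 z.2 ν)
      (𝓝 (μ, ν)) (𝓝 (0 + 0)) :=
    ((aux_W1_tendsto μ).comp (continuous_fst.tendsto (μ, ν))).add
      ((aux_W1_tendsto ν).comp (continuous_snd.tendsto (μ, ν)))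
  rw [add_zero] at h
  refine squeeze_zero (fun _ => dist_nonneg) (fun z => ?_) h
  rw [Real.dist_eq, abs_le]
  have h1 := W1_triangle z.1 μ z.2
  have h2 := W1_triangle μ ν z.2
  have h3 := W1_triangle μ z.1 ν
  have h4 := W1_triangle z.1 z.2 ν
  rw [W1_comm ν z.2] at h2
  rw [W1_comm μ z.1] at h3
  constructor <;> simp only <;> linarith

lemma W1_cont_comp {Z : Type*} [TopologicalSpace Z] {f g : Z → ProbabilityMeasure X}
    (hf : Continuous f) (hg : Continuous g) : Continuous fun z => W1 (f z) (g z) :=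
  W1_continuous.comp (hf.prodMk hg)

lemma aux_modulus {Z : Type*} [TopologicalSpace Z] [CompactSpace Z] {D ρ : Z → ℝ}
    (hD : Continuous D) (hρ : Continuous ρ) (hρ0 : ∀ z, 0 ≤ ρ z) (h : ∀ z, ρ z = 0 → D z ≤ 0)
    {ε : ℝ} (hε : 0 < ε) : ∃ K : ℝ, 0 ≤ K ∧ ∀ z, D z ≤ ε + K * ρ z := by
  have hC : IsCompact {z | ε ≤ D z} := (isClosed_le continuous_const hD).isCompact
  rcases Set.eq_empty_or_nonempty {z | ε ≤ D z} with he | hne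
  · refine ⟨0, le_rfl, fun z => ?_⟩
    by_contra! hz
    have : z ∈ ({z | ε ≤ D z} : Set Z) := by
      simp only [Set.mem_ofPred_eq]; linarith
    rw [he] at this; exact this
  · obtain ⟨a, ha, hmin⟩ := hC.exists_isMinOn hne hρ.continuousOn
    obtain ⟨b, hb, hmax⟩ := hC.exists_isMaxOn hne hD.continuousOn
    have hpos : 0 < ρ a := lt_of_le_of_ne (hρ0 a) fun h0 => by
      have h1 := h a h0.symm
      have h2 : ε ≤ D a := ha
      linarith
    have hDb : 0 < D b := lt_of_lt_of_le hε hb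
    refine ⟨D b / ρ a, (div_pos hDb hpos).le, fun z => ?_⟩
    have hnn : 0 ≤ D b / ρ a * ρ z := mul_nonneg (div_pos hDb hpos).le (hρ0 z)
    by_cases hz : ε ≤ D z
    · have h1 : D z ≤ D b := hmax hz
      have h2 : ρ a ≤ ρ z := hmin hz
      have h3 : D b / ρ a * ρ a ≤ D b / ρ a * ρ z :=
        mul_le_mul_of_nonneg_left h2 (div_pos hDb hpos).le
      rw [div_mul_cancel₀ _ hpos.ne'] at h3
      linarith
    · linarith

lemma aux_fun_modulus {f : X → ℝ} (hf : Continuous f) {ε : ℝ} (hε : 0 < ε) :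
    ∃ K : ℝ, 0 ≤ K ∧ ∀ x y, |f x - f y| ≤ ε + K * dist x y := by
  obtain ⟨K, hK, h⟩ := aux_modulus (Z := X × X) (D := fun z => |f z.1 - f z.2|)
    (ρ := fun z => dist z.1 z.2) (by fun_prop) (by fun_prop) (fun z => dist_nonneg)
    (fun z hz => by rw [dist_eq_zero] at hz; simp [hz]) hε
  exact ⟨K, hK, fun x y => h (x, y)⟩

lemma aux_integral_modulus {f : X → ℝ} (hf : Continuous f) {ε : ℝ} (hε : 0 < ε) :
    ∃ K : ℝ, 0 ≤ K ∧ ∀ μ ν : ProbabilityMeasure X,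
      |∫ x, f x ∂(μ : Measure X) - ∫ x, f x ∂(ν : Measure X)| ≤ ε + K * W1 μ ν := by
  obtain ⟨K, hK, h⟩ := aux_fun_modulus hf (half_pos hε)
  refine ⟨K, hK, fun μ ν => ?_⟩
  have := aux_almostLip μ ν (fun g hg => le_W1 μ ν hg) hf hK h
  linarith

lemma aux_eq_of_W1 {μ ν : ProbabilityMeasure X} (h : W1 μ ν = 0) : μ = ν := by
  apply Subtype.ext
  refine ext_of_forall_integral_eq_of_IsFiniteMeasure (μ := (μ : Measure X))
    (ν := (ν : Measure X)) fun f => ?_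
  rw [← sub_eq_zero, ← abs_eq_zero]
  refine le_antisymm (le_of_forall_pos_le_add fun ε hε => ?_) (abs_nonneg _)
  obtain ⟨K, -, hK⟩ := aux_integral_modulus f.continuous hε
  have := hK μ ν
  rw [h] at this
  simpa using this

lemma aux_cont_of_W1 {Z : Type*} [TopologicalSpace Z] {f : Z → ProbabilityMeasure X}
    (h : ∀ z0, Tendsto (fun z => W1 (f z) (f z0)) (𝓝 z0) (𝓝 0)) : Continuous f := by
  rw [ProbabilityMeasure.continuous_iff_forall_continuous_integral]
  intro g
  rw [continuous_iff_continuousAt]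
  intro z0
  rw [ContinuousAt, Metric.tendsto_nhds]
  intro ε hε
  obtain ⟨K, hK0, hK⟩ := aux_integral_modulus g.continuous (half_pos hε)
  have h1 := (h z0).const_mul K
  rw [mul_zero] at h1
  filter_upwards [h1.eventually (gt_mem_nhds (half_pos hε))] with z hz
  rw [Real.dist_eq]
  linarith [hK (f z) (f z0)]

lemma aux_cont_of_almost {Z : Type*} [TopologicalSpace Z] {f : Z → ProbabilityMeasure X}
    {ρ : Z → Z → ℝ} (hρ : ∀ z0, Tendsto (fun z => ρ z z0) (𝓝 z0) (𝓝 0))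
    (h : ∀ ε > 0, ∃ K : ℝ, ∀ z z0, W1 (f z) (f z0) ≤ ε + K * ρ z z0) : Continuous f := by
  refine aux_cont_of_W1 fun z0 => ?_
  rw [Metric.tendsto_nhds]
  intro ε hε
  obtain ⟨K, hK⟩ := h _ (half_pos hε)
  have h1 := (hρ z0).const_mul K
  rw [mul_zero] at h1
  filter_upwards [h1.eventually (gt_mem_nhds (half_pos hε))] with z hz
  rw [Real.dist_eq, sub_zero, abs_of_nonneg (W1_nonneg _ _)]
  linarith [hK z z0]

lemma aux_meas_of_cont {Z : Type*} [TopologicalSpace Z] [MeasurableSpace Z]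
    [OpensMeasurableSpace Z] {Y : Type*} [TopologicalSpace Y] [TopologicalSpace.PseudoMetrizableSpace Y]
    [MeasurableSpace Y] [BorelSpace Y] {f : Z → ProbabilityMeasure Y}
    (hf : Continuous f) : Measurable fun z => (f z : Measure Y) := by
  let _ : PseudoMetricSpace Y := TopologicalSpace.pseudoMetrizableSpacePseudoMetric Y
  refine Measurable.measure_of_isPiSystem_of_isProbabilityMeasure
    (S := {s : Set Y | IsClosed s}) ?_ isPiSystem_isClosed ?_
  · rw [← borel_eq_generateFrom_isClosed]; exact BorelSpace.measurable_eq
  · intro s hs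
    have hs' : IsClosed s := hs
    have hlim := fun z => tendsto_lintegral_thickenedIndicator_of_isClosed (f z : Measure Y) hs'
      (δs := fun n : ℕ => 1 / ((n : ℝ) + 1)) (fun n => by positivity)
      tendsto_one_div_add_atTop_nhds_zero_nat
    refine measurable_of_tendsto_metrizable (f := fun (n : ℕ) z => ∫⁻ ω,
      (thickenedIndicator (δ := 1 / ((n : ℝ) + 1)) (by positivity) s ω : ENNReal) ∂(f z : Measure Y))
      (fun n => ?_) (tendsto_pi_nhds.2 hlim)
    exact ((ProbabilityMeasure.continuous_iff_forall_continuous_lintegral.1 hf) _).measurable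

end Aux
section AuxB
set_option linter.unusedSectionVars false

lemma aux_integral_bind {Z Y : Type*} [MeasurableSpace Z] [TopologicalSpace Y] [CompactSpace Y]
    [MeasurableSpace Y] [OpensMeasurableSpace Y] (m : Measure Z) [IsProbabilityMeasure m]
    {f : Z → ProbabilityMeasure Y} (hf : Measurable fun z => (f z : Measure Y))
    {g : Y → ℝ} (hg : Continuous g) :
    ∫ y, g y ∂(m.bind fun z => (f z : Measure Y)) = ∫ z, ∫ y, g y ∂(f z : Measure Y) ∂m := by
  let η : ProbabilityTheory.Kernel Z Y := ⟨fun z => (f z : Measure Y), hf⟩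
  have hη : (m.bind fun z => (f z : Measure Y)) =
      (ProbabilityTheory.Kernel.comp η (ProbabilityTheory.Kernel.const Unit m)) () := by
    rw [ProbabilityTheory.Kernel.comp_apply]; rfl
  have : IsProbabilityMeasure (m.bind fun z => (f z : Measure Y)) :=
    isProbabilityMeasure_bind hf.aemeasurable (ae_of_all _ fun z => inferInstance)
  have hi : Integrable g ((ProbabilityTheory.Kernel.comp η
      (ProbabilityTheory.Kernel.const Unit m)) ()) := by
    rw [← hη]; exact aux_int _ hg
  rw [hη, ProbabilityTheory.Kernel.integral_comp hi]
  rfl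

section bindP
variable {Z Y : Type*} [TopologicalSpace Z] [MeasurableSpace Z] [OpensMeasurableSpace Z]
  [MetricSpace Y] [CompactSpace Y] [MeasurableSpace Y] [BorelSpace Y]

/-- bind of probability measures -/
noncomputable def bindP (m : ProbabilityMeasure Z) (f : Z → ProbabilityMeasure Y)
    (hf : Continuous f) : ProbabilityMeasure Y :=
  ⟨(m : Measure Z).bind fun z => (f z : Measure Y),
    isProbabilityMeasure_bind (aux_meas_of_cont hf).aemeasurable
      (ae_of_all _ fun _ => inferInstance)⟩

lemma coe_bindP (m : ProbabilityMeasure Z) (f : Z → ProbabilityMeasure Y) (hf : Continuous f) :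
    (bindP m f hf : Measure Y) = (m : Measure Z).bind fun z => (f z : Measure Y) := rfl

lemma integral_bindP (m : ProbabilityMeasure Z) (f : Z → ProbabilityMeasure Y)
    (hf : Continuous f) {g : Y → ℝ} (hg : Continuous g) :
    ∫ y, g y ∂(bindP m f hf : Measure Y) = ∫ z, ∫ y, g y ∂(f z : Measure Y) ∂(m : Measure Z) :=
  aux_integral_bind _ (aux_meas_of_cont hf) hg

end bindP

variable {X : Type*} [MetricSpace X] [CompactSpace X] [MeasurableSpace X] [BorelSpace X]

/-- comparing binds of close, almost Lipschitz kernels. -/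
lemma aux_bind_close {Z : Type*} [MetricSpace Z] [CompactSpace Z] [MeasurableSpace Z] [BorelSpace Z]
    (m m' : ProbabilityMeasure Z) (f f' : Z → ProbabilityMeasure X)
    (hf : Continuous f) (hf' : Continuous f') {A c ε K : ℝ} (hK : 0 ≤ K)
    (hA : ∀ g : Z → ℝ, LipschitzWith 1 g →
      |∫ x, g x ∂(m : Measure Z) - ∫ x, g x ∂(m' : Measure Z)| ≤ A)
    (h1 : ∀ z, W1 (f z) (f' z) ≤ c)
    (h2 : ∀ z z', W1 (f' z) (f' z') ≤ ε + K * dist z z') :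
    W1 (bindP m f hf) (bindP m' f' hf') ≤ c + (2 * ε + K * A) := by
  refine W1_le fun g hg => ?_
  have hc : Continuous fun z => ∫ y, g y ∂(f z : Measure X) :=
    (aux_cont_integral hg.continuous).comp hf
  have hc' : Continuous fun z => ∫ y, g y ∂(f' z : Measure X) :=
    (aux_cont_integral hg.continuous).comp hf'
  rw [integral_bindP _ _ _ hg.continuous, integral_bindP _ _ _ hg.continuous]
  refine (abs_sub_le _ (∫ z, ∫ y, g y ∂(f' z : Measure X) ∂(m : Measure Z)) _).trans
    (add_le_add ?_ ?_)
  · rw [← integral_sub (aux_int _ hc) (aux_int _ hc')]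
    exact aux_abs_integral_le _ fun z => (le_W1 _ _ hg).trans (h1 z)
  · exact aux_almostLip m m' hA hc' hK fun x y => (le_W1 _ _ hg).trans (h2 x y)

lemma integral_emp [Nonempty X] {N : ℕ} (hN : N ≠ 0) (x : Fin N → X) {g : X → ℝ}
    (hg : Continuous g) :
    ∫ y, g y ∂(emp N x : Measure X) = (N : ℝ)⁻¹ * ∑ i, g (x i) := by
  have : (emp N x : Measure X) = (N : ENNReal)⁻¹ • ∑ i : Fin N, Measure.dirac (x i) := by
    simp [emp, hN]
  rw [this, integral_smul_measure, integral_finsetSum_measure]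
  · simp
  · intro i _
    exact aux_int _ hg

lemma emp_continuous [Nonempty X] (N : ℕ) : Continuous (emp N : (Fin N → X) → _) := by
  rcases eq_or_ne N 0 with rfl | hN
  · exact continuous_of_const fun x y => by rw [Subsingleton.elim x y]
  · rw [ProbabilityMeasure.continuous_iff_forall_continuous_integral]
    intro f
    simp_rw [integral_emp hN _ f.continuous]
    fun_prop

lemma aux_lln1 [Nonempty X] {g : X → ℝ} (hg : Continuous g) {η : ℝ} (hη : 0 < η) :
    ∀ᶠ N : ℕ in atTop, ∀ ν : Fin N → ProbabilityMeasure X,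
      ∫ y, |(N : ℝ)⁻¹ * ∑ i, g (y i) - (N : ℝ)⁻¹ * ∑ i, ∫ x, g x ∂(ν i : Measure X)|
        ∂(Measure.pi fun i => (ν i : Measure X)) ≤ η := by
  obtain ⟨C, hC⟩ := (isCompact_range hg.abs).bddAbove
  have hC' : ∀ x, |g x| ≤ C := fun x => hC ⟨x, rfl⟩
  have hlim : Tendsto (fun N : ℕ => η / 2 + C ^ 2 / (η / 2) / (N : ℝ)) atTop (𝓝 (η / 2 + 0)) :=
    tendsto_const_nhds.add (tendsto_const_div_atTop_nhds_zero_nat _)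
  rw [add_zero] at hlim
  filter_upwards [hlim.eventually (gt_mem_nhds (half_lt_self hη)), eventually_gt_atTop 0]
    with N hN hN0 ν
  refine le_trans ?_ hN.le
  have hNR : (0 : ℝ) < N := by exact_mod_cast hN0
  set P := Measure.pi fun i => (ν i : Measure X) with hP
  set a := ∑ i, ∫ x, g x ∂(ν i : Measure X) with ha
  have hcS : Continuous fun y : Fin N → X => ∑ i, g (y i) := by fun_prop
  have hES : ∫ y, ∑ i, g (y i) ∂P = a := by
    rw [integral_finsetSum]
    · refine Finset.sum_congr rfl fun i _ => ?_
      have hm := (measurePreserving_eval (fun i => (ν i : Measure X)) i)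
      rw [← hm.map_eq, integral_map hm.measurable.aemeasurable hg.aestronglyMeasurable]
    · intro i _
      exact aux_int P (f := fun y : Fin N → X => g (y i)) (by fun_prop)
  have hmem : ∀ i, MemLp g 2 (ν i : Measure X) := fun i =>
    MemLp.of_bound hg.aestronglyMeasurable C (ae_of_all _ hC')
  have hvar := ProbabilityTheory.variance_sum_pi (μ := fun i => (ν i : Measure X))
    (X := fun _ => g) hmem
  have hfun : (∑ i, fun ω : Fin N → X => g (ω i)) = fun y : Fin N → X => ∑ i, g (y i) := by
    ext y; simp
  rw [hfun, ProbabilityTheory.variance_eq_integral hcS.aemeasurable, hES] at hvar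
  have hvb : ∑ i, ProbabilityTheory.variance g (ν i : Measure X) ≤ N * C ^ 2 := by
    have : ∀ i ∈ (Finset.univ : Finset (Fin N)),
        ProbabilityTheory.variance g (ν i : Measure X) ≤ C ^ 2 := by
      intro i _
      refine (ProbabilityTheory.variance_le_expectation_sq hg.aestronglyMeasurable).trans ?_
      refine (le_abs_self _).trans (aux_abs_integral_le _ fun y => ?_)
      simp only [Pi.pow_apply]
      rw [abs_pow]
      exact pow_le_pow_left₀ (abs_nonneg _) (hC' y) 2
    simpa using Finset.sum_le_sum this
  calc _ ≤ ∫ y, (η / 2 + (((N : ℝ)⁻¹) ^ 2 / (η / 2)) * (∑ i, g (y i) - a) ^ 2) ∂P := by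
        refine integral_mono (aux_int P (by fun_prop)) (aux_int P (by fun_prop)) fun y => ?_
        simp only
        rw [← mul_sub, div_mul_eq_mul_div, ← mul_pow]
        set Y := (N : ℝ)⁻¹ * (∑ i, g (y i) - a)
        have h2 : 0 < η / 2 := half_pos hη
        rw [← sub_le_iff_le_add', le_div_iff₀ h2, ← sq_abs Y]
        nlinarith [sq_nonneg (|Y| - η / 2), abs_nonneg Y]
    _ = η / 2 + (((N : ℝ)⁻¹) ^ 2 / (η / 2)) * ∑ i, ProbabilityTheory.variance g (ν i : Measure X) := by
        rw [integral_add (integrable_const _) (aux_int P (by fun_prop)), integral_const_mul, ← hvar, ← hP]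
        simp
    _ ≤ η / 2 + (((N : ℝ)⁻¹) ^ 2 / (η / 2)) * (N * C ^ 2) := by gcongr
    _ = _ := by field_simp

lemma aux_lln [Nonempty X] {ε : ℝ} (hε : 0 < ε) :
    ∀ᶠ N : ℕ in atTop, ∀ (ν : Fin N → ProbabilityMeasure X) (ρ : ProbabilityMeasure X),
      (∀ g : X → ℝ, Continuous g → ∫ x, g x ∂(ρ : Measure X) =
        (N : ℝ)⁻¹ * ∑ i, ∫ x, g x ∂(ν i : Measure X)) →
      ∫ y, W1 (emp N y) ρ ∂(Measure.pi fun i => (ν i : Measure X)) ≤ ε := by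
  obtain ⟨s, hs, hW⟩ := aux_W1_net (X := X) (half_pos hε)
  have hη : 0 < ε / 2 / (s.card + 1) := by positivity
  have hall := (Finset.eventually_all s (l := atTop)).2 fun g hg => aux_lln1 (hs g hg) hη
  filter_upwards [hall, eventually_gt_atTop 0] with N hN hN0 ν ρ hρ
  set P := Measure.pi fun i => (ν i : Measure X) with hP
  have hci : ∀ g ∈ s, Continuous fun y : Fin N → X =>
      |∫ x, g x ∂(emp N y : Measure X) - ∫ x, g x ∂(ρ : Measure X)| := fun g hg =>
    (((aux_cont_integral (hs g hg)).comp (emp_continuous N)).sub continuous_const).abs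
  calc _ ≤ ∫ y, (ε / 2 + ∑ g ∈ s, |∫ x, g x ∂(emp N y : Measure X) - ∫ x, g x ∂(ρ : Measure X)|) ∂P := by
        refine integral_mono (aux_int P (W1_cont_comp (emp_continuous N) continuous_const))
          (aux_int P (continuous_const.add (continuous_finsetSum _ hci))) fun y => ?_
        exact hW _ _
    _ = ε / 2 + ∑ g ∈ s, ∫ y, |∫ x, g x ∂(emp N y : Measure X) - ∫ x, g x ∂(ρ : Measure X)| ∂P := by
        rw [integral_add (integrable_const _) (aux_int P (continuous_finsetSum _ hci)),
          integral_finsetSum _ fun g hg => aux_int P (hci g hg)]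
        simp
    _ ≤ ε / 2 + ∑ g ∈ s, ε / 2 / (s.card + 1) := by
        gcongr with g hg
        have := hN g hg ν
        rw [← hρ g (hs g hg)] at this
        simp_rw [← integral_emp hN0.ne' _ (hs g hg)] at this
        exact this
    _ ≤ ε := by
        rw [Finset.sum_const, nsmul_eq_mul]
        have : (s.card : ℝ) * (ε / 2 / (s.card + 1)) ≤ ε / 2 := by
          rw [mul_div_assoc', div_le_iff₀ (by positivity)]
          nlinarith [half_pos hε]
        linarith

end AuxB
section AuxC
set_option linter.unusedSectionVars false
variable {X U : Type*} [MetricSpace X] [CompactSpace X] [MeasurableSpace X] [BorelSpace X]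
    [MetricSpace U] [CompactSpace U] [MeasurableSpace U] [BorelSpace U]

/-- Lipschitz policies -/
def PolLip (L : ℝ) (q : X → ProbabilityMeasure X → ProbabilityMeasure U) : Prop :=
  ∀ (x x' : X) (μ μ' : ProbabilityMeasure X) (g : U → ℝ), LipschitzWith 1 g →
      |∫ u, g u ∂(q x μ : Measure U) - ∫ u, g u ∂(q x' μ' : Measure U)|
        ≤ L * (dist x x' + W1 μ μ')

lemma aux_rho (z0 : X × ProbabilityMeasure X) :
    Tendsto (fun z : X × ProbabilityMeasure X => dist z.1 z0.1 + W1 z.2 z0.2) (𝓝 z0) (𝓝 0) := by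
  have : Continuous fun z : X × ProbabilityMeasure X => dist z.1 z0.1 + W1 z.2 z0.2 :=
    (continuous_fst.dist continuous_const).add (W1_cont_comp continuous_snd continuous_const)
  have h := this.tendsto z0
  simpa [W1_self] using h

lemma PolLip.continuous {L : ℝ} {q : X → ProbabilityMeasure X → ProbabilityMeasure U}
    (hq : PolLip L q) : Continuous fun z : X × ProbabilityMeasure X => q z.1 z.2 := by
  refine aux_cont_of_almost (ρ := fun z z0 => dist z.1 z0.1 + W1 z.2 z0.2) aux_rho ?_
  intro ε hε
  refine ⟨L, fun z z0 => W1_le fun g hg => ?_⟩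
  have := hq z.1 z0.1 z.2 z0.2 g hg
  linarith

variable {p : X → U → ProbabilityMeasure X → ProbabilityMeasure X}
    (hp : Continuous fun z : X × U × ProbabilityMeasure X => p z.1 z.2.1 z.2.2)

lemma aux_p_cont (hp : Continuous fun z : X × U × ProbabilityMeasure X => p z.1 z.2.1 z.2.2)
    (x : X) (μ : ProbabilityMeasure X) : Continuous fun u => p x u μ :=
  hp.comp (continuous_const.prodMk (continuous_id.prodMk continuous_const))

/-- one-agent transition -/
noncomputable def stepK (q : X → ProbabilityMeasure X → ProbabilityMeasure U) (x : X)
    (μ : ProbabilityMeasure X) : ProbabilityMeasure X :=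
  bindP (q x μ) (fun u => p x u μ) (aux_p_cont hp x μ)

lemma aux_p_modulus (hp : Continuous fun z : X × U × ProbabilityMeasure X => p z.1 z.2.1 z.2.2)
    {ε : ℝ} (hε : 0 < ε) : ∃ K : ℝ, 0 ≤ K ∧ ∀ x x' u u' μ μ',
    W1 (p x u μ) (p x' u' μ') ≤ ε + K * (dist x x' + dist u u' + W1 μ μ') := by
  obtain ⟨K, hK, h⟩ := aux_modulus
    (Z := (X × U × ProbabilityMeasure X) × (X × U × ProbabilityMeasure X))
    (D := fun z => W1 (p z.1.1 z.1.2.1 z.1.2.2) (p z.2.1 z.2.2.1 z.2.2.2))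
    (ρ := fun z => dist z.1.1 z.2.1 + dist z.1.2.1 z.2.2.1 + W1 z.1.2.2 z.2.2.2)
    (W1_cont_comp (hp.comp continuous_fst) (hp.comp continuous_snd))
    ((Continuous.add (by fun_prop) (by fun_prop)).add (W1_cont_comp (by fun_prop) (by fun_prop)))
    (fun z => by have := W1_nonneg z.1.2.2 z.2.2.2; positivity)
    (by
      rintro ⟨⟨x, u, μ⟩, ⟨x', u', μ'⟩⟩ h0
      simp only at h0
      have h1 := W1_nonneg μ μ'
      have h2 := dist_nonneg (x := x) (y := x')
      have h3 := dist_nonneg (x := u) (y := u')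
      have e1 : x = x' := dist_eq_zero.1 (by linarith)
      have e2 : u = u' := dist_eq_zero.1 (by linarith)
      have e3 : μ = μ' := aux_eq_of_W1 (by linarith)
      subst e1 e2 e3
      simp [W1_self]) hε
  exact ⟨K, hK, fun x x' u u' μ μ' => h ((x, u, μ), (x', u', μ'))⟩

lemma stepK_modulus {L : ℝ} (hL : 0 < L) {ε : ℝ} (hε : 0 < ε) : ∃ K : ℝ, 0 ≤ K ∧
    ∀ q : X → ProbabilityMeasure X → ProbabilityMeasure U, PolLip L q → ∀ x x' μ μ',
    W1 (stepK hp q x μ) (stepK hp q x' μ') ≤ ε + K * (dist x x' + W1 μ μ') := by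
  obtain ⟨K, hK, h⟩ := aux_p_modulus hp (ε := ε / 3) (by positivity)
  refine ⟨K * (1 + L), by positivity, fun q hq x x' μ μ' => ?_⟩
  have := aux_bind_close (q x μ) (q x' μ') (fun u => p x u μ) (fun u => p x' u μ')
    (aux_p_cont hp x μ) (aux_p_cont hp x' μ') hK (hq x x' μ μ')
    (c := ε / 3 + K * (dist x x' + W1 μ μ')) (ε := ε / 3)
    (fun u => by simpa using h x x' u u μ μ')
    (fun u u' => by simpa [W1_self] using h x' x' u u' μ' μ')
  refine this.trans (le_of_eq ?_)
  ring

lemma stepK_continuous {L : ℝ} (hL : 0 < L) {q : X → ProbabilityMeasure X → ProbabilityMeasure U}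
    (hq : PolLip L q) : Continuous fun z : X × ProbabilityMeasure X => stepK hp q z.1 z.2 := by
  refine aux_cont_of_almost (ρ := fun z z0 => dist z.1 z0.1 + W1 z.2 z0.2) aux_rho ?_
  intro ε hε
  obtain ⟨K, -, h⟩ := stepK_modulus hp hL hε
  exact ⟨K, fun z z0 => h q hq _ _ _ _⟩

lemma stepK_continuous' {L : ℝ} (hL : 0 < L) {q : X → ProbabilityMeasure X → ProbabilityMeasure U}
    (hq : PolLip L q) (μ : ProbabilityMeasure X) : Continuous fun x => stepK hp q x μ :=
  Continuous.comp (g := fun z : X × ProbabilityMeasure X => stepK hp q z.1 z.2)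
    (f := fun x : X => (x, μ)) (stepK_continuous hp hL hq)
    (continuous_id.prodMk continuous_const)

/-- mean field transition -/
noncomputable def stepT {L : ℝ} (hL : 0 < L) {q : X → ProbabilityMeasure X → ProbabilityMeasure U}
    (hq : PolLip L q) (μ : ProbabilityMeasure X) : ProbabilityMeasure X :=
  bindP μ (fun x => stepK hp q x μ) (stepK_continuous' hp hL hq μ)

lemma stepT_modulus {L : ℝ} (hL : 0 < L) {ε : ℝ} (hε : 0 < ε) : ∃ K : ℝ, 0 ≤ K ∧
    ∀ (q : X → ProbabilityMeasure X → ProbabilityMeasure U) (hq : PolLip L q), ∀ μ μ',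
    W1 (stepT hp hL hq μ) (stepT hp hL hq μ') ≤ ε + K * W1 μ μ' := by
  obtain ⟨K, hK, h⟩ := stepK_modulus hp hL (ε := ε / 3) (by positivity)
  refine ⟨K * 2, by positivity, fun q hq μ μ' => ?_⟩
  have := aux_bind_close μ μ' (fun x => stepK hp q x μ) (fun x => stepK hp q x μ')
    (stepK_continuous' hp hL hq μ) (stepK_continuous' hp hL hq μ') hK
    (fun g hg => le_W1 μ μ' hg)
    (c := ε / 3 + K * W1 μ μ') (ε := ε / 3)
    (fun x => by simpa using h q hq x x μ μ')
    (fun x x' => by simpa [W1_self] using h q hq x x' μ' μ')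
  refine this.trans (le_of_eq ?_)
  ring

lemma stepT_emp [Nonempty X] {L : ℝ} (hL : 0 < L)
    {q : X → ProbabilityMeasure X → ProbabilityMeasure U}
    (hq : PolLip L q) {N : ℕ} (hN : N ≠ 0) (x : Fin N → X) (g : X → ℝ) (hg : Continuous g) :
    ∫ y, g y ∂(stepT hp hL hq (emp N x) : Measure X) =
      (N : ℝ)⁻¹ * ∑ i, ∫ y, g y ∂(stepK hp q (x i) (emp N x) : Measure X) := by
  rw [stepT, integral_bindP _ _ _ hg, integral_emp hN]
  exact Continuous.comp (g := fun m : ProbabilityMeasure X => ∫ y, g y ∂(m : Measure X))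
    (f := fun x => stepK hp q x _) (aux_cont_integral hg) (stepK_continuous' hp hL hq _)

/-- joint transition -/
noncomputable def stepN [Nonempty X] (q : X → ProbabilityMeasure X → ProbabilityMeasure U) (N : ℕ)
    (x : Fin N → X) : ProbabilityMeasure (Fin N → X) :=
  ProbabilityMeasure.pi fun i => stepK hp q (x i) (emp N x)

lemma stepN_continuous [Nonempty X] {L : ℝ} (hL : 0 < L)
    {q : X → ProbabilityMeasure X → ProbabilityMeasure U}
    (hq : PolLip L q) (N : ℕ) : Continuous (stepN hp q N) := by
  refine ProbabilityMeasure.continuous_pi.comp (continuous_pi fun i => ?_)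
  exact Continuous.comp (g := fun z : X × ProbabilityMeasure X => stepK hp q z.1 z.2)
    (f := fun x : Fin N → X => (x i, emp N x)) (stepK_continuous hp hL hq)
    ((continuous_apply i).prodMk (emp_continuous N))

lemma law_succ [Nonempty X] (π : ℕ → X → ProbabilityMeasure X → ProbabilityMeasure U)
    (μ0 : ProbabilityMeasure X) (N t : ℕ) :
    mfcLawN p π μ0 N (t + 1) = (mfcLawN p π μ0 N t).bind
      fun x => (stepN hp (π t) N x : Measure (Fin N → X)) := rfl

lemma law_prob (hp : Continuous fun z : X × U × ProbabilityMeasure X => p z.1 z.2.1 z.2.2)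
    [Nonempty X] {L : ℝ} (hL : 0 < L)
    {π : ℕ → X → ProbabilityMeasure X → ProbabilityMeasure U} (hπ : ∀ t, PolLip L (π t))
    (μ0 : ProbabilityMeasure X) (N t : ℕ) : IsProbabilityMeasure (mfcLawN p π μ0 N t) := by
  induction t with
  | zero => rw [mfcLawN]; infer_instance
  | succ t ih =>
    rw [law_succ hp]
    exact isProbabilityMeasure_bind
      (aux_meas_of_cont (stepN_continuous hp hL (hπ t) N)).aemeasurable
      (ae_of_all _ fun _ => inferInstance)

lemma main_conv (hp : Continuous fun z : X × U × ProbabilityMeasure X => p z.1 z.2.1 z.2.2)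
    [Nonempty X] {L : ℝ} (hL : 0 < L)
    {Pi : Set (ℕ → X → ProbabilityMeasure X → ProbabilityMeasure U)}
    (hPi : ∀ π ∈ Pi, ∀ t, PolLip L (π t))
    (μ0 : ProbabilityMeasure X)
    (mf : (ℕ → X → ProbabilityMeasure X → ProbabilityMeasure U) → ℕ → ProbabilityMeasure X)
    (hmf0 : ∀ q, mf q 0 = μ0)
    (hmf : ∀ q (hq : q ∈ Pi), ∀ t : ℕ, mf q (t + 1) = stepT hp hL (hPi q hq t) (mf q t)) (t : ℕ) :
    ∀ ε > 0, ∀ᶠ N : ℕ in atTop, ∀ q ∈ Pi,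
      ∫ x, W1 (emp N x) (mf q t) ∂(mfcLawN p q μ0 N t) ≤ ε := by
  induction t with
  | zero =>
    intro ε hε
    filter_upwards [aux_lln (X := X) hε, eventually_gt_atTop 0] with N hN hN0 q hq
    rw [hmf0]
    refine hN (fun _ => μ0) μ0 fun g hg => ?_
    have : (N : ℝ) ≠ 0 := by exact_mod_cast hN0.ne'
    simp [inv_mul_cancel_left₀ this]
  | succ t ih =>
    intro ε hε
    obtain ⟨K, hK, h⟩ := stepT_modulus hp hL (ε := ε / 3) (by positivity)
    have hη : 0 < ε / 3 / (K + 1) := by positivity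
    filter_upwards [aux_lln (X := X) (ε := ε / 3) (by positivity), eventually_gt_atTop 0,
      ih _ hη] with N hN hN0 hih q hq
    have hql := hPi q hq t
    have := law_prob hp hL (hPi q hq) μ0 N t
    have hW : ∀ ν : ProbabilityMeasure X, Continuous fun y : Fin N → X => W1 (emp N y) ν :=
      fun ν => W1_cont_comp (emp_continuous N) continuous_const
    have hcN := stepN_continuous hp hL hql N
    rw [law_succ hp, aux_integral_bind _ (aux_meas_of_cont hcN) (hW _), hmf q hq]
    calc _ ≤ ∫ x, (2 * (ε / 3) + K * W1 (emp N x) (mf q t)) ∂(mfcLawN p q μ0 N t) := by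
          refine integral_mono (aux_int _ ((aux_cont_integral (hW _)).comp hcN))
            (aux_int _ (continuous_const.add (continuous_const.mul (hW _)))) fun x => ?_
          have h1 : ∫ y, W1 (emp N y) (stepT hp hL hql (mf q t)) ∂(stepN hp (q t) N x : Measure _)
              ≤ ∫ y, (W1 (emp N y) (stepT hp hL hql (emp N x)) +
                W1 (stepT hp hL hql (emp N x)) (stepT hp hL hql (mf q t)))
                ∂(stepN hp (q t) N x : Measure (Fin N → X)) :=
            integral_mono (aux_int _ (hW _)) (aux_int _ ((hW _).add continuous_const))
              fun y => W1_triangle _ _ _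
          rw [integral_add (aux_int _ (hW _)) (integrable_const _)] at h1
          have h2 := hN (fun i => stepK hp (q t) (x i) (emp N x)) (stepT hp hL hql (emp N x))
            (stepT_emp hp hL hql hN0.ne' x)
          have h3 := h (q t) hql (emp N x) (mf q t)
          have h2' : ∫ y, W1 (emp N y) (stepT hp hL hql (emp N x))
            ∂(stepN hp (q t) N x : Measure (Fin N → X)) ≤ ε / 3 := h2
          simp only [integral_const, probReal_univ, smul_eq_mul, one_mul] at h1
          simp only
          linarith
      _ = 2 * (ε / 3) + K * ∫ x, W1 (emp N x) (mf q t) ∂(mfcLawN p q μ0 N t) := by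
          rw [integral_add (integrable_const _) ((aux_int _ (hW _)).const_mul K)]
          simp [integral_const_mul]
      _ ≤ 2 * (ε / 3) + K * (ε / 3 / (K + 1)) := by
          gcongr
          exact hih q hq
      _ ≤ ε := by
          have : K * (ε / 3 / (K + 1)) ≤ ε / 3 := by
            rw [mul_div_assoc', div_le_iff₀ (by positivity)]
            nlinarith
          linarith

/-- The MFC policy associated to an agent policy. -/
lemma aux_pol {L : ℝ} {q : X → ProbabilityMeasure X → ProbabilityMeasure U} (hL : 0 < L)
    (hq : PolLip L q) (μ : ProbabilityMeasure X) : ∃ h : ProbabilityMeasure (X × U),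
      h ∈ Hset μ ∧ ((h : Measure (X × U)).bind fun z => (p z.1 z.2 μ : Measure X)) =
        (stepT hp hL hq μ : Measure X) := by
  have hqc : Continuous fun x => q x μ := hq.continuous.comp (continuous_id.prodMk continuous_const)
  let κ : ProbabilityTheory.Kernel X U := ⟨fun x => (q x μ : Measure U), aux_meas_of_cont hqc⟩
  have hκ : ProbabilityTheory.IsMarkovKernel κ := ⟨fun x => by
    change IsProbabilityMeasure (q x μ : Measure U); infer_instance⟩
  have hpm : Measurable fun z : X × U => (p z.1 z.2 μ : Measure X) :=
    aux_meas_of_cont (f := fun z : X × U => p z.1 z.2 μ)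
      (hp.comp (continuous_fst.prodMk (continuous_snd.prodMk continuous_const)))
  refine ⟨⟨(μ : Measure X).compProd κ, inferInstance⟩, ?_, ?_⟩
  · change ((μ : Measure X).compProd κ).map Prod.fst = (μ : Measure X)
    exact Measure.fst_compProd _ _
  · ext s hs
    have hev : Measurable fun z : X × U => (p z.1 z.2 μ : Measure X) s :=
      (Measure.measurable_coe hs).comp hpm
    change (((μ : Measure X).compProd κ).bind _) s = _
    rw [Measure.bind_apply hs hpm.aemeasurable, Measure.lintegral_compProd hev, stepT,
      coe_bindP, Measure.bind_apply hs (aux_meas_of_cont (stepK_continuous' hp hL hq μ)).aemeasurable]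
    refine lintegral_congr fun x => ?_
    rw [stepK, coe_bindP, Measure.bind_apply hs (aux_meas_of_cont (aux_p_cont hp x μ)).aemeasurable]
    rfl

end AuxC
/-- approximate optimality of MFC solutions for deterministic MFC. If the
agent-level policy `π*` induced by an optimal deterministic MFC policy (optimal among all MFC
policies `μ ↦ h ∈ ℋ(μ)`) belongs to the equi-Lipschitz class `Π`, then it is `ε(N)`-optimal in
the `N`-agent system, `J^N(Φ(π*)) ≥ sup_{π ∈ Π} J^N(π) − ε(N)`, with `ε(N) → 0` as `N → ∞`. -/
theorem statement12 {X U : Type*}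
    [MetricSpace X] [CompactSpace X] [MeasurableSpace X] [BorelSpace X] [Nonempty X]
    [MetricSpace U] [CompactSpace U] [MeasurableSpace U] [BorelSpace U]
    (p : X → U → ProbabilityMeasure X → ProbabilityMeasure X)
    (hp : Continuous fun z : X × U × ProbabilityMeasure X => p z.1 z.2.1 z.2.2)
    (r : ProbabilityMeasure X → ℝ) (hr : Continuous r)
    (γ : ℝ) (hγ0 : 0 < γ) (hγ1 : γ < 1)
    (L : ℝ) (hL : 0 < L)
    (Pi : Set (ℕ → X → ProbabilityMeasure X → ProbabilityMeasure U))
    (hPi : ∀ π ∈ Pi, ∀ (t : ℕ) (x x' : X) (μ μ' : ProbabilityMeasure X) (g : U → ℝ),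
      LipschitzWith 1 g →
      |∫ u, g u ∂(π t x μ : Measure U) - ∫ u, g u ∂(π t x' μ' : Measure U)|
        ≤ L * (dist x x' + W1 μ μ'))
    (μ0 : ProbabilityMeasure X)
    (T : ProbabilityMeasure X → ProbabilityMeasure (X × U) → ProbabilityMeasure X)
    (hT : ∀ (μ : ProbabilityMeasure X) (ν : ProbabilityMeasure (X × U)),
      (T μ ν : Measure X) = (ν : Measure (X × U)).bind fun z => (p z.1 z.2 μ : Measure X))
    (mf : (ℕ → X → ProbabilityMeasure X → ProbabilityMeasure U) → ℕ → ProbabilityMeasure X)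
    (hmf0 : ∀ q, mf q 0 = μ0)
    (hmf : ∀ q ∈ Pi, ∀ t : ℕ,
      (mf q (t + 1) : Measure X) = (mf q t : Measure X).bind fun x =>
        ((q t x (mf q t) : Measure U)).bind fun u => (p x u (mf q t) : Measure X))
    (πstar : ℕ → X → ProbabilityMeasure X → ProbabilityMeasure U) (hπstar : πstar ∈ Pi)
    (hopt : ∀ pol : ℕ → ProbabilityMeasure X → ProbabilityMeasure (X × U),
      (∀ t μ, pol t μ ∈ Hset μ) →
      (∑' t : ℕ, γ ^ t * r (mfcTraj T pol μ0 t)) ≤ ∑' t : ℕ, γ ^ t * r (mf πstar t)) :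
    ∀ ε > (0 : ℝ), ∃ N0 : ℕ, ∀ N ≥ N0, ∀ q ∈ Pi,
      (∑' t : ℕ, γ ^ t * ∫ x, r (emp N x) ∂(mfcLawN p πstar μ0 N t))
        ≥ (∑' t : ℕ, γ ^ t * ∫ x, r (emp N x) ∂(mfcLawN p q μ0 N t)) - ε := by
  classical
  have hPL : ∀ π ∈ Pi, ∀ t, PolLip L (π t) := fun π hπ t => hPi π hπ t
  have hmf' : ∀ q (hq : q ∈ Pi), ∀ t : ℕ, mf q (t + 1) = stepT hp hL (hPL q hq t) (mf q t) :=
    fun q hq t => Subtype.ext (hmf q hq t)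
  -- optimality
  have hJ : ∀ q ∈ Pi, (∑' t : ℕ, γ ^ t * r (mf q t)) ≤ ∑' t : ℕ, γ ^ t * r (mf πstar t) := by
    intro q hq
    choose pol hpol1 hpol2 using fun t μ => aux_pol hp hL (hPL q hq t) μ
    have htraj : ∀ t, mfcTraj T pol μ0 t = mf q t := by
      intro t
      induction t with
      | zero => rw [mfcTraj, hmf0]
      | succ t ih =>
        rw [mfcTraj, ih, hmf' q hq]
        exact Subtype.ext ((hT _ _).trans (hpol2 _ _))
    have := hopt pol hpol1
    simpa only [htraj] using this
  -- bounded rewards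
  obtain ⟨M, hM⟩ := (isCompact_range hr.abs).bddAbove
  have hM' : ∀ μ, |r μ| ≤ M := fun μ => hM ⟨μ, rfl⟩
  have hgeo : Summable fun t : ℕ => γ ^ t * M :=
    (summable_geometric_of_lt_one hγ0.le hγ1).mul_right M
  have hsumm : ∀ a : ℕ → ℝ, (∀ t, |a t| ≤ M) → Summable fun t : ℕ => γ ^ t * a t := by
    intro a ha
    refine Summable.of_norm_bounded hgeo fun t => ?_
    rw [norm_mul, Real.norm_eq_abs, Real.norm_eq_abs, abs_of_pos (pow_pos hγ0 t)]
    exact mul_le_mul_of_nonneg_left (ha t) (pow_pos hγ0 t).le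
  have hR : ∀ q ∈ Pi, ∀ N t, |∫ x, r (emp N x) ∂(mfcLawN p q μ0 N t)| ≤ M := by
    intro q hq N t
    have := law_prob hp hL (hPL q hq) μ0 N t
    exact aux_abs_integral_le _ fun x => hM' _
  -- convergence of each reward
  have hconv : ∀ t, Tendsto (fun z : ℕ × (ℕ → X → ProbabilityMeasure X → ProbabilityMeasure U) =>
      γ ^ t * (∫ x, r (emp z.1 x) ∂(mfcLawN p z.2 μ0 z.1 t) - r (mf z.2 t)))
      (atTop ×ˢ 𝓟 Pi) (𝓝 0) := by
    intro t
    rw [← mul_zero (γ ^ t)]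
    refine Tendsto.const_mul _ ?_
    rw [Metric.tendsto_nhds]
    intro ε hε
    rw [eventually_prod_principal_iff]
    obtain ⟨K, hK, h⟩ := aux_modulus (Z := ProbabilityMeasure X × ProbabilityMeasure X)
      (D := fun z => |r z.1 - r z.2|) (ρ := fun z => W1 z.1 z.2) (by fun_prop) W1_continuous
      (fun z => W1_nonneg _ _) (fun z hz => by rw [aux_eq_of_W1 hz]; simp) (ε := ε / 3)
      (by positivity)
    have hη : 0 < ε / 3 / (K + 1) := by positivity
    filter_upwards [main_conv hp hL hPL μ0 mf hmf0 hmf' t _ hη] with N hN q hq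
    have := law_prob hp hL (hPL q hq) μ0 N t
    have hc : Continuous fun x : Fin N → X => r (emp N x) := hr.comp (emp_continuous N)
    have hW : Continuous fun x : Fin N → X => W1 (emp N x) (mf q t) :=
      W1_cont_comp (emp_continuous N) continuous_const
    rw [Real.dist_eq, sub_zero]
    have e1 : ∫ x, r (emp N x) ∂(mfcLawN p q μ0 N t) - r (mf q t) =
        ∫ x, (r (emp N x) - r (mf q t)) ∂(mfcLawN p q μ0 N t) := by
      rw [integral_sub (aux_int _ hc) (integrable_const _)]
      simp
    rw [e1]
    calc _ ≤ ∫ x, |r (emp N x) - r (mf q t)| ∂(mfcLawN p q μ0 N t) :=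
          abs_integral_le_integral_abs
      _ ≤ ∫ x, (ε / 3 + K * W1 (emp N x) (mf q t)) ∂(mfcLawN p q μ0 N t) :=
          integral_mono (aux_int _ (hc.sub continuous_const).abs)
            (aux_int _ (continuous_const.add (continuous_const.mul hW)))
            fun x => h (emp N x, mf q t)
      _ = ε / 3 + K * ∫ x, W1 (emp N x) (mf q t) ∂(mfcLawN p q μ0 N t) := by
          rw [integral_add (integrable_const _) ((aux_int _ hW).const_mul K)]
          simp [integral_const_mul]
      _ ≤ ε / 3 + K * (ε / 3 / (K + 1)) := by
          gcongr
          exact hN q hq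
      _ < ε := by
          have : K * (ε / 3 / (K + 1)) ≤ ε / 3 := by
            rw [mul_div_assoc', div_le_iff₀ (by positivity)]
            nlinarith
          linarith
  have hlim := tendsto_tsum_of_dominated_convergence (𝓕 := atTop ×ˢ 𝓟 Pi)
    (bound := fun t => 2 * (γ ^ t * M)) (hgeo.mul_left 2) hconv (by
      rw [eventually_prod_principal_iff]
      refine Eventually.of_forall fun N q hq t => ?_
      rw [norm_mul, Real.norm_eq_abs, Real.norm_eq_abs, abs_of_pos (pow_pos hγ0 t)]
      have h1 := (abs_sub _ _).trans (add_le_add (hR q hq N t) (hM' (mf q t)))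
      have h2 := mul_le_mul_of_nonneg_left h1 (pow_pos hγ0 t).le
      simp only
      linarith)
  rw [tsum_zero, Metric.tendsto_nhds] at hlim
  intro ε hε
  have hev := hlim (ε / 2) (half_pos hε)
  rw [eventually_prod_principal_iff, eventually_atTop] at hev
  obtain ⟨N0, hN0⟩ := hev
  refine ⟨N0, fun N hN q hq => ?_⟩
  have key : ∀ q ∈ Pi, |(∑' t : ℕ, γ ^ t * ∫ x, r (emp N x) ∂(mfcLawN p q μ0 N t)) -
      ∑' t : ℕ, γ ^ t * r (mf q t)| < ε / 2 := by
    intro q hq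
    have := hN0 N hN q hq
    rw [Real.dist_eq, sub_zero] at this
    rw [← (hsumm _ (hR q hq N)).tsum_sub (hsumm _ fun t => hM' (mf q t))]
    simpa only [mul_sub] using this
  have h1 := abs_lt.1 (key q hq)
  have h2 := abs_lt.1 (key πstar hπstar)
  have h3 := hJ q hq
  linarith [h1.2, h2.1]
end
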